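/- Let z_0 = exp((log X)^{1/3}) and fix ϑ ∈ (0, 1/2), R = X^ϑ. Suppose h is a function on primes with |h(p)| ≪_ε p^{−ε} for all primes p, and let A > 0 be fixed. Then there exists a function E_0(X), depending only on X, G, and ϑ, with E_0(X) → 0 as X → ∞, such that Σ_{m, n ≤ R, (mn, ℓ P(z_0)) = 1} [μ(m) μ(n) / [m, n]] · G(log m / log R) · G(log n / log R) · Π_{p | mn} (1 + h(p)) = [(1 + E_0(X)) / log R] · Π_{p ≤ z_0} (1 − 1/p)^{−1} + O_{ε, A}((log R)^{−A}), uniformly for ℓ ≪ X^{O(1)}. -/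

import Mathlib

/-!
Write `W = ⌊z₀⌋`, `R = X ^ ϑ`, `L = log R` and `V(W) = ∏_{p ≤ W} (1 - 1/p)`. Only squarefree `m`, `n` with all
prime factors beyond `W` contribute, so the sum is a quadratic form `sieveForm` over sets of primes in
`(W, R]`, with a local weight `(1 + h p) / p` at each prime of `[m, n]` not dividing `ℓ`, and `0` at the
others.

The function `h` and the modulus `ℓ` are removed first (`sieveForm_removal`). Every prime involved exceeds
`z₀ = exp ((log X) ^ (1/3))` and `ℓ` has `O(log X)` prime factors, so replacing the local weights by `1 / p`
changes them by a total that is smaller than every negative power of `L`, while the Euler product of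
absolute values is only a power of `L` (`prod_three_le`). What remains depends on `X`, `G` and `ϑ` alone, and
`E₀` is defined by it.

To see that `E₀ → 0`, let `γ = G X`. Fourier inversion of `e ^ t γ(t)` writes `γ(t)` as an integral of
`e ^ (-a t)` over the line `Re a = 1`, with a density bounded by `‖a‖ ^ (-18)` times a power of `log log X`
(`exists_fourier_rep`). The form becomes a double integral of Euler products
`∏_{p > W} (1 - p ^ (-1-a/L) - p ^ (-1-b/L) + p ^ (-1-(a+b)/L))` (`sieveForm_eq_integral`); as `γ` vanishes
beyond `1`, primes `p > R` may be added freely, and dominated convergence gives the infinite products.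
These agree up to `1 + O(1/W)` with the rough part of `ζ(1+(a+b)/L) / (ζ(1+a/L) ζ(1+b/L))`. For small `a`
and `b` the pole of `ζ` at `1`, together with trivial bounds for the primes `p ≤ W` (here
`(log W) ^ 2 = o(L)` matters), shows that `L V(W)` times the product is `a b / (a + b) + o(1)`. For large `a` or
`b` a polynomial bound in `L` suffices, thanks to the decay of the density (`exists_locF_limit`). No
information on `ζ` away from `1` is needed.

Finally `1 / (a + b) = ∫₀^∞ e ^ (-t (a + b)) dt` turns the main term into `∫₀^∞ γ'(t) ^ 2 dt` (`integral_main`),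
which is `1 + O(1 / log log X)` because `γ' = -1` on `(0, 1 - 1 / log log X)` and `γ'` is bounded.
-/

/-- `P(y)`: the product of all primes `p ≤ y`. -/
noncomputable def Pprod (y : ℝ) : ℕ := ∏ p ∈ (Finset.Iic ⌊y⌋₊).filter Nat.Prime, p

/-- `z₀ = exp((log X)^{1/3})`. -/
noncomputable def z0 (X : ℝ) : ℝ := Real.exp (Real.log X ^ ((1 : ℝ) / 3))

open Filter Topology

/-! ### The sum as a quadratic form over sets of primes -/

/-- The primes in the interval `(W, Y]`. -/
def roughPrimes (W Y : ℕ) : Finset ℕ := (Finset.Ioc W Y).filter Nat.Prime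

theorem mem_roughPrimes {W Y p : ℕ} : p ∈ roughPrimes W Y ↔ (W < p ∧ p ≤ Y) ∧ p.Prime := by
  simp [roughPrimes]

/-- The quadratic form of the sieve, with a squarefree integer encoded by its set of primes:
`(-1)^{#A}` is `μ(m)`, `A ∪ B` is the set of primes of `[m, n]`, and `w p` is the weight
attached to each prime of `[m, n]` (`w p = 1 / p` gives the weight `1 / [m, n]`). -/
noncomputable def sieveForm (P : Finset ℕ) (w : ℕ → ℝ) (γ : ℝ → ℝ) (L : ℝ) : ℝ :=
  ∑ A ∈ P.powerset, ∑ B ∈ P.powerset,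
    (-1) ^ A.card * (-1) ^ B.card * (∏ p ∈ A ∪ B, w p) *
      (γ ((∑ p ∈ A, Real.log p) / L) * γ ((∑ p ∈ B, Real.log p) / L))

/-- A sum over pairs of sets of primes of a product of local factors is an Euler product. -/
theorem sum_powerset_pair {R : Type*} [CommRing R] (P : Finset ℕ) (α β w : ℕ → R) :
    ∑ A ∈ P.powerset, ∑ B ∈ P.powerset,
      (∏ p ∈ A, α p) * (∏ p ∈ B, β p) * ∏ p ∈ A ∪ B, w p =
    ∏ p ∈ P, (1 + w p * (α p + β p + α p * β p)) := by
  induction P using Finset.induction_on with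
  | empty => simp
  | insert a s ha ih =>
    rw [Finset.prod_insert ha, ← ih, Finset.sum_powerset_insert ha, Finset.mul_sum,
      ← Finset.sum_add_distrib]
    refine Finset.sum_congr rfl fun A hA => ?_
    rw [Finset.sum_powerset_insert ha, Finset.sum_powerset_insert ha, Finset.mul_sum,
      ← Finset.sum_add_distrib, ← Finset.sum_add_distrib, ← Finset.sum_add_distrib]
    refine Finset.sum_congr rfl fun B hB => ?_
    have hA' : a ∉ A := fun h => ha (Finset.mem_powerset.1 hA h)
    have hB' : a ∉ B := fun h => ha (Finset.mem_powerset.1 hB h)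
    have hAB : a ∉ A ∪ B := by simp [hA', hB']
    simp only [Finset.insert_union, Finset.union_insert, Finset.insert_idem,
      Finset.prod_insert hA', Finset.prod_insert hB', Finset.prod_insert hAB]
    ring

/-- Reindexing a sum over integers `m ≤ N` by the prime sets of the squarefree ones. -/
theorem sum_Icc_eq_sum_powerset {N W Y : ℕ} (hNY : N ≤ Y) (f : ℕ → ℝ)
    (h1 : ∀ m, m ∈ Finset.Icc 1 N → f m ≠ 0 → Squarefree m ∧ ∀ p ∈ m.primeFactors, W < p)
    (h2 : ∀ m, N < m → f m = 0) :
    ∑ m ∈ Finset.Icc 1 N, f m = ∑ A ∈ (roughPrimes W Y).powerset, f (∏ p ∈ A, p) := by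
  refine Finset.sum_bij_ne_zero (fun m _ _ => m.primeFactors) ?_ ?_ ?_ ?_
  · intro m hm hf
    obtain ⟨-, hp⟩ := h1 m hm hf
    rw [Finset.mem_powerset]
    intro p hpm
    have hm' := Finset.mem_Icc.1 hm
    have := Nat.le_of_dvd (by omega) (Nat.dvd_of_mem_primeFactors hpm)
    exact mem_roughPrimes.2 ⟨⟨hp p hpm, by omega⟩, Nat.prime_of_mem_primeFactors hpm⟩
  · intro a ha hfa b hb hfb hab
    rw [← Nat.prod_primeFactors_of_squarefree (h1 a ha hfa).1,
      ← Nat.prod_primeFactors_of_squarefree (h1 b hb hfb).1, hab]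
  · intro A hA hf
    have hpr : ∀ p ∈ A, p.Prime := fun p hp => (mem_roughPrimes.1 (Finset.mem_powerset.1 hA hp)).2
    refine ⟨∏ p ∈ A, p, ?_, hf, Nat.primeFactors_prod hpr⟩
    rw [Finset.mem_Icc]
    refine ⟨Finset.prod_pos fun p hp => (hpr p hp).pos, ?_⟩
    by_contra! h
    exact hf (h2 _ h)
  · intro m hm hf
    rw [Nat.prod_primeFactors_of_squarefree (h1 m hm hf).1]

theorem prime_dvd_Pprod {z : ℝ} {p : ℕ} (hp : p.Prime) : p ∣ Pprod z ↔ p ≤ ⌊z⌋₊ := by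
  rw [Pprod, hp.prime.dvd_finsetProd_iff]
  constructor
  · rintro ⟨q, hq, hpq⟩
    simp only [Finset.mem_filter, Finset.mem_Iic] at hq
    rw [(Nat.prime_dvd_prime_iff_eq hp hq.2).1 hpq]; exact hq.1
  · intro h
    exact ⟨p, by simp [h, hp], dvd_rfl⟩

/-- The coprimality condition of the sum, prime by prime. -/
theorem Pprod_coprime_iff {z : ℝ} {k ℓ : ℕ} :
    Nat.gcd k (ℓ * Pprod z) = 1 ↔ ∀ p, p.Prime → p ∣ k → ¬ p ∣ ℓ ∧ ⌊z⌋₊ < p := by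
  rw [← Nat.coprime_iff_gcd_eq_one, Nat.coprime_iff_gcd_eq_one, Nat.eq_one_iff_not_exists_prime_dvd]
  refine forall_congr' fun p => forall_congr' fun hp => ?_
  rw [Nat.dvd_gcd_iff, hp.dvd_mul, prime_dvd_Pprod hp]
  rw [not_and, not_or, not_le]

/-- The local weight at `p` of the sum in the theorem: primes dividing `ℓ` are excluded. -/
noncomputable def locWeight (h : ℕ → ℝ) (ℓ p : ℕ) : ℝ := if p ∣ ℓ then 0 else (1 + h p) / p

/-- The summand at the squarefree integers with prime sets `A` and `B`. When the coprimality condition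
fails, some prime of `A ∪ B` divides `ℓ` and the product of local weights vanishes. -/
theorem term_eq {z : ℝ} {Y ℓ : ℕ} (h : ℕ → ℝ) (γ : ℝ → ℝ) (L : ℝ) {A B : Finset ℕ}
    (hA : A ⊆ roughPrimes ⌊z⌋₊ Y) (hB : B ⊆ roughPrimes ⌊z⌋₊ Y) :
    (if Nat.gcd ((∏ p ∈ A, p) * ∏ p ∈ B, p) (ℓ * Pprod z) = 1 then
      (ArithmeticFunction.moebius (∏ p ∈ A, p) : ℝ) *
        (ArithmeticFunction.moebius (∏ p ∈ B, p) : ℝ) /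
          (Nat.lcm (∏ p ∈ A, p) (∏ p ∈ B, p)) *
        γ (Real.log (∏ p ∈ A, p : ℕ) / L) * γ (Real.log (∏ p ∈ B, p : ℕ) / L) *
        ∏ p ∈ ((∏ p ∈ A, p) * ∏ p ∈ B, p).primeFactors, (1 + h p)
      else 0) =
    (-1) ^ A.card * (-1) ^ B.card * (∏ p ∈ A ∪ B, locWeight h ℓ p) *
      (γ ((∑ p ∈ A, Real.log p) / L) * γ ((∑ p ∈ B, Real.log p) / L)) := by
  have hpr : ∀ {A : Finset ℕ}, A ⊆ roughPrimes ⌊z⌋₊ Y → ∀ p ∈ A, p.Prime :=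
    fun hA p hp => (mem_roughPrimes.1 (hA hp)).2
  have hne : ∀ {A : Finset ℕ}, A ⊆ roughPrimes ⌊z⌋₊ Y → (∏ p ∈ A, p) ≠ 0 := fun hA =>
    Finset.prod_ne_zero_iff.2 fun p hp => (hpr hA p hp).ne_zero
  have hpf : ∀ {A : Finset ℕ}, A ⊆ roughPrimes ⌊z⌋₊ Y → (∏ p ∈ A, p).primeFactors = A :=
    fun hA => Nat.primeFactors_prod (hpr hA)
  have hsq : ∀ {A : Finset ℕ}, A ⊆ roughPrimes ⌊z⌋₊ Y → Squarefree (∏ p ∈ A, p) := by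
    intro A hA
    refine Finset.squarefree_prod_of_pairwise_isCoprime ?_ fun p hp => (hpr hA p hp).squarefree
    intro p hp q hq hpq
    exact Nat.coprime_iff_isRelPrime.1 ((Nat.coprime_primes (hpr hA p hp) (hpr hA q hq)).2 hpq)
  have hmu : ∀ {A : Finset ℕ}, A ⊆ roughPrimes ⌊z⌋₊ Y →
      (ArithmeticFunction.moebius (∏ p ∈ A, p) : ℝ) = (-1) ^ A.card := by
    intro A hA
    rw [ArithmeticFunction.isMultiplicative_moebius.map_prod_of_prime A (hpr hA)]
    push_cast
    rw [Finset.prod_congr rfl fun p hp => by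
      rw [ArithmeticFunction.moebius_apply_prime (hpr hA p hp)], Finset.prod_const]
    simp
  have hlog : ∀ {A : Finset ℕ}, A ⊆ roughPrimes ⌊z⌋₊ Y →
      Real.log (∏ p ∈ A, p : ℕ) = ∑ p ∈ A, Real.log p := by
    intro A hA
    rw [Nat.cast_prod, Real.log_prod]
    intro p hp
    exact_mod_cast (hpr hA p hp).ne_zero
  have hlcm : Nat.lcm (∏ p ∈ A, p) (∏ p ∈ B, p) = ∏ p ∈ A ∪ B, p := by
    refine Nat.dvd_antisymm (Nat.lcm_dvd
      (Finset.prod_dvd_prod_of_subset _ _ _ Finset.subset_union_left)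
      (Finset.prod_dvd_prod_of_subset _ _ _ Finset.subset_union_right)) ?_
    refine Finset.prod_primes_dvd _ (fun p hp => ?_) fun p hp => ?_
    · exact (hpr (Finset.union_subset hA hB) p hp).prime
    · rcases Finset.mem_union.1 hp with hp | hp
      · exact (Finset.dvd_prod_of_mem _ hp).trans (Nat.dvd_lcm_left _ _)
      · exact (Finset.dvd_prod_of_mem _ hp).trans (Nat.dvd_lcm_right _ _)
  rw [hlog hA, hlog hB, hmu hA, hmu hB, Nat.primeFactors_mul (hne hA) (hne hB), hpf hA, hpf hB,
    hlcm]
  have hU : A ∪ B ⊆ roughPrimes ⌊z⌋₊ Y := Finset.union_subset hA hB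
  have hdiv : ∀ p, p.Prime → (p ∣ (∏ p ∈ A, p) * ∏ p ∈ B, p ↔ p ∈ A ∪ B) := by
    intro p hp
    rw [← Nat.mem_primeFactors_of_ne_zero (mul_ne_zero (hne hA) (hne hB)) |>.trans
      (and_iff_right hp), Nat.primeFactors_mul (hne hA) (hne hB), hpf hA, hpf hB]
  split_ifs with hc <;> rw [Pprod_coprime_iff] at hc
  · have : ∏ p ∈ A ∪ B, locWeight h ℓ p = (∏ p ∈ A ∪ B, (1 + h p)) / (∏ p ∈ A ∪ B, p : ℕ) := by
      rw [Nat.cast_prod, ← Finset.prod_div_distrib]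
      refine Finset.prod_congr rfl fun p hp => ?_
      have hpp := hpr hU p hp
      rw [locWeight, if_neg (hc p hpp ((hdiv p hpp).2 hp)).1]
    rw [this]; ring
  · push Not at hc
    obtain ⟨p, hp, hpd, hp2⟩ := hc
    have hpU := (hdiv p hp).1 hpd
    have : p ∣ ℓ := by
      by_contra hl
      have := (mem_roughPrimes.1 (hU hpU)).1.1
      have := hp2 hl
      omega
    rw [Finset.prod_eq_zero hpU (by simp [locWeight, this])]
    simp

/-- The sum of the theorem is a value of `sieveForm`; primes `p > N` may be added freely since
`γ` vanishes beyond `1`. -/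
theorem sum_eq_sieveForm {z : ℝ} {N Y ℓ : ℕ} (hNY : N ≤ Y) (h : ℕ → ℝ) (γ : ℝ → ℝ) {L : ℝ}
    (hγ : ∀ m : ℕ, N < m → γ (Real.log m / L) = 0) :
    (∑ m ∈ Finset.Icc 1 N, ∑ n ∈ Finset.Icc 1 N,
      if Nat.gcd (m * n) (ℓ * Pprod z) = 1 then
        (ArithmeticFunction.moebius m : ℝ) * (ArithmeticFunction.moebius n : ℝ) /
            (Nat.lcm m n) * γ (Real.log m / L) * γ (Real.log n / L) *
          ∏ p ∈ (m * n).primeFactors, (1 + h p)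
      else 0) = sieveForm (roughPrimes ⌊z⌋₊ Y) (locWeight h ℓ) γ L := by
  have key : ∀ m n : ℕ, m ≠ 0 → n ≠ 0 → (if Nat.gcd (m * n) (ℓ * Pprod z) = 1 then
        (ArithmeticFunction.moebius m : ℝ) * (ArithmeticFunction.moebius n : ℝ) /
            (Nat.lcm m n) * γ (Real.log m / L) * γ (Real.log n / L) *
          ∏ p ∈ (m * n).primeFactors, (1 + h p)
      else 0) ≠ 0 → (Squarefree m ∧ ∀ p ∈ m.primeFactors, ⌊z⌋₊ < p) ∧
        (Squarefree n ∧ ∀ p ∈ n.primeFactors, ⌊z⌋₊ < p) := by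
    intro m n hm hn hne
    split_ifs at hne with hc
    · rw [Pprod_coprime_iff] at hc
      have hmu : ArithmeticFunction.moebius m ≠ 0 := fun h0 => hne (by simp [h0])
      have hnu : ArithmeticFunction.moebius n ≠ 0 := fun h0 => hne (by simp [h0])
      refine ⟨⟨ArithmeticFunction.moebius_ne_zero_iff_squarefree.1 hmu, fun p hp => ?_⟩,
        ⟨ArithmeticFunction.moebius_ne_zero_iff_squarefree.1 hnu, fun p hp => ?_⟩⟩
      · exact (hc p (Nat.prime_of_mem_primeFactors hp)
          ((Nat.dvd_of_mem_primeFactors hp).mul_right _)).2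
      · exact (hc p (Nat.prime_of_mem_primeFactors hp)
          ((Nat.dvd_of_mem_primeFactors hp).mul_left _)).2
    · exact absurd rfl hne
  rw [sum_Icc_eq_sum_powerset (W := ⌊z⌋₊) hNY, sieveForm]
  · refine Finset.sum_congr rfl fun A hA => ?_
    have hA0 : (∏ p ∈ A, p) ≠ 0 := Finset.prod_ne_zero_iff.2 fun p hp =>
      (mem_roughPrimes.1 (Finset.mem_powerset.1 hA hp)).2.ne_zero
    rw [sum_Icc_eq_sum_powerset (W := ⌊z⌋₊) hNY]
    · refine Finset.sum_congr rfl fun B hB => ?_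
      exact term_eq h γ L (Finset.mem_powerset.1 hA) (Finset.mem_powerset.1 hB)
    · intro n hn hf
      exact (key _ n hA0 (by have := Finset.mem_Icc.1 hn; omega) hf).2
    · intro n hn
      rw [hγ n hn]; simp
  · intro m hm hf
    obtain ⟨n, hn, hf⟩ := Finset.exists_ne_zero_of_sum_ne_zero hf
    exact (key m n (by have := Finset.mem_Icc.1 hm; omega)
      (by have := Finset.mem_Icc.1 hn; omega) hf).1
  · intro m hm
    refine Finset.sum_eq_zero fun n _ => ?_
    rw [hγ m hm]; simp

/-! ### Perturbation of the local weights and zeta near 1 -/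

theorem abs_prod_sub_prod_le (U : Finset ℕ) (w w₀ e : ℕ → ℝ) (hw₀ : ∀ p ∈ U, 0 ≤ w₀ p)
    (he : ∀ p ∈ U, |w p - w₀ p| ≤ e p) :
    |∏ p ∈ U, w p - ∏ p ∈ U, w₀ p| ≤ ∏ p ∈ U, (w₀ p + e p) - ∏ p ∈ U, w₀ p := by
  induction U using Finset.induction_on with
  | empty => simp
  | insert a s ha ih =>
    have ih := ih (fun p hp => hw₀ p (Finset.mem_insert_of_mem hp))
      (fun p hp => he p (Finset.mem_insert_of_mem hp))
    have h0 := hw₀ a (Finset.mem_insert_self a s)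
    have h1 := he a (Finset.mem_insert_self a s)
    have h2 : 0 ≤ ∏ p ∈ s, w₀ p :=
      Finset.prod_nonneg fun p hp => hw₀ p (Finset.mem_insert_of_mem hp)
    have h3 : |w a| ≤ w₀ a + e a := by
      have := abs_sub_abs_le_abs_sub (w a) (w₀ a)
      rw [abs_of_nonneg h0] at this
      linarith
    rw [Finset.prod_insert ha, Finset.prod_insert ha, Finset.prod_insert ha]
    calc |w a * ∏ p ∈ s, w p - w₀ a * ∏ p ∈ s, w₀ p|
        = |w a * (∏ p ∈ s, w p - ∏ p ∈ s, w₀ p) + (w a - w₀ a) * ∏ p ∈ s, w₀ p| := by ring_nf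
      _ ≤ |w a| * |∏ p ∈ s, w p - ∏ p ∈ s, w₀ p| + |w a - w₀ a| * ∏ p ∈ s, w₀ p := by
          refine (abs_add_le _ _).trans ?_
          rw [abs_mul, abs_mul, abs_of_nonneg h2]
      _ ≤ (w₀ a + e a) * (∏ p ∈ s, (w₀ p + e p) - ∏ p ∈ s, w₀ p) + e a * ∏ p ∈ s, w₀ p := by
          gcongr
          exact (abs_nonneg _).trans h3
      _ = _ := by ring

/-- The effect on the sieve form of changing each local weight `w₀ p` by at most `e p`: bound every term by
its absolute value and recombine into Euler products, whose local factors are `1 + 3 w₀ p`. -/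
theorem sieveForm_sub_le (P : Finset ℕ) (w w₀ e : ℕ → ℝ) (γ : ℝ → ℝ) (L C : ℝ)
    (hw₀ : ∀ p ∈ P, 0 ≤ w₀ p) (he : ∀ p ∈ P, |w p - w₀ p| ≤ e p) (hγ : ∀ t, |γ t| ≤ C) :
    |sieveForm P w γ L - sieveForm P w₀ γ L| ≤
      C ^ 2 * ((∏ p ∈ P, (1 + 3 * w₀ p)) * (Real.exp (3 * ∑ p ∈ P, e p) - 1)) := by
  have hC : 0 ≤ C := (abs_nonneg _).trans (hγ 0)
  have hen : ∀ p ∈ P, 0 ≤ e p := fun p hp => (abs_nonneg _).trans (he p hp)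
  have step1 : |sieveForm P w γ L - sieveForm P w₀ γ L| ≤
      ∑ A ∈ P.powerset, ∑ B ∈ P.powerset,
        (∏ p ∈ A ∪ B, (w₀ p + e p) - ∏ p ∈ A ∪ B, w₀ p) * C ^ 2 := by
    rw [sieveForm, sieveForm, ← Finset.sum_sub_distrib]
    refine (Finset.abs_sum_le_sum_abs _ _).trans (Finset.sum_le_sum fun A hA => ?_)
    rw [← Finset.sum_sub_distrib]
    refine (Finset.abs_sum_le_sum_abs _ _).trans (Finset.sum_le_sum fun B hB => ?_)
    have hU : A ∪ B ⊆ P := Finset.union_subset (Finset.mem_powerset.1 hA) (Finset.mem_powerset.1 hB)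
    have h1 := abs_prod_sub_prod_le (A ∪ B) w w₀ e (fun p hp => hw₀ p (hU hp))
      (fun p hp => he p (hU hp))
    rw [← sub_mul, ← mul_sub, abs_mul, abs_mul, abs_mul, abs_mul, abs_pow, abs_pow, sq]
    simp only [abs_neg, abs_one, one_pow, one_mul]
    gcongr
    · exact (abs_nonneg _).trans h1
    · exact hγ _
    · exact hγ _
  have step2 : ∑ A ∈ P.powerset, ∑ B ∈ P.powerset,
        (∏ p ∈ A ∪ B, (w₀ p + e p) - ∏ p ∈ A ∪ B, w₀ p) * C ^ 2 =
      C ^ 2 * (∏ p ∈ P, (1 + 3 * (w₀ p + e p)) - ∏ p ∈ P, (1 + 3 * w₀ p)) := by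
    have h1 := sum_powerset_pair P (fun _ => (1 : ℝ)) (fun _ => 1) (fun p => w₀ p + e p)
    have h2 := sum_powerset_pair P (fun _ => (1 : ℝ)) (fun _ => 1) w₀
    simp only [Finset.prod_const_one, one_mul] at h1 h2
    simp only [← Finset.sum_mul, Finset.sum_sub_distrib]
    rw [h1, h2, mul_comm]
    congr 2 <;> exact Finset.prod_congr rfl fun p _ => by ring
  rw [step2] at step1
  refine step1.trans ?_
  gcongr
  rw [mul_sub, mul_one]
  gcongr
  rw [Finset.mul_sum, Real.exp_sum, ← Finset.prod_mul_distrib]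
  refine Finset.prod_le_prod (fun p hp => ?_) fun p hp => ?_
  · have := hw₀ p hp; have := hen p hp; positivity
  · have h0 := hw₀ p hp
    have h1 := hen p hp
    have h2 := Real.add_one_le_exp (3 * e p)
    calc 1 + 3 * (w₀ p + e p) ≤ (1 + 3 * w₀ p) * (3 * e p + 1) := by nlinarith [mul_nonneg h0 h1]
      _ ≤ _ := by gcongr

/-- A finite product `∏ (1 + p ^ (-1 - σ))` expands into distinct terms of the series `ζ(1 + σ)`. -/
theorem prod_le_zeta (s : Finset ℕ) (hs : ∀ p ∈ s, p.Prime) {σ : ℝ} (hσ : 0 < σ) :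
    ∏ p ∈ s, (1 + (p : ℝ) ^ (-(1 + σ))) ≤ ‖riemannZeta (1 + σ)‖ := by
  have hsum : Summable fun n : ℕ => (n : ℝ) ^ (-(1 + σ)) :=
    Real.summable_nat_rpow.2 (by linarith)
  have h1 : riemannZeta (1 + σ) = ((∑' n : ℕ, (n : ℝ) ^ (-(1 + σ)) : ℝ) : ℂ) := by
    rw [zeta_eq_tsum_one_div_nat_cpow (by simpa using hσ), Complex.ofReal_tsum]
    refine tsum_congr fun n => ?_
    rw [Complex.ofReal_cpow (by positivity)]
    push_cast
    rw [Complex.cpow_neg, one_div]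
  have h2 : ∏ p ∈ s, (1 + (p : ℝ) ^ (-(1 + σ))) =
      ∑ n ∈ s.powerset.image (fun A => ∏ p ∈ A, p), (n : ℝ) ^ (-(1 + σ)) := by
    rw [Finset.prod_one_add, Finset.sum_image]
    · refine Finset.sum_congr rfl fun A hA => ?_
      rw [Nat.cast_prod, Real.finsetProd_rpow _ _ fun p _ => by positivity]
    · intro A hA B hB hAB
      have hA' : ∀ p ∈ A, p.Prime := fun p hp => hs p (Finset.mem_powerset.1 hA hp)
      have hB' : ∀ p ∈ B, p.Prime := fun p hp => hs p (Finset.mem_powerset.1 hB hp)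
      rw [← Nat.primeFactors_prod hA', ← Nat.primeFactors_prod hB']
      exact congrArg _ hAB
  rw [h1, h2, Complex.norm_real, Real.norm_eq_abs]
  exact (hsum.sum_le_tsum _ fun n _ => by positivity).trans (le_abs_self _)

/-- Close to `s = 1`, `ζ(s) (s - 1) = 1 + O(|s - 1|)`. -/
theorem exists_zeta_near_one : ∃ δ : ℝ, 0 < δ ∧ δ ≤ 1 ∧ ∃ C : ℝ, 1 ≤ C ∧ ∀ a : ℂ, a ≠ 0 → ‖a‖ ≤ δ →
    riemannZeta (1 + a) ≠ 0 ∧ ‖a * riemannZeta (1 + a) - 1‖ ≤ C * ‖a‖ ∧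
    ‖a * riemannZeta (1 + a) - 1‖ ≤ 1 / 2 := by
  have hO : (fun s => riemannZeta₁ s - 1) =O[𝓝 1] fun s : ℂ => s - 1 := by
    simpa using (differentiable_riemannZeta₁.differentiableAt (x := 1)).isBigO_sub
  obtain ⟨C, hC⟩ := hO.bound
  obtain ⟨δ, hδ, hball⟩ := Metric.eventually_nhds_iff.1 hC
  refine ⟨min (δ / 2) (min 1 (1 / (2 * (|C| + 1)))), by positivity, by simp, |C| + 1, by
    linarith [abs_nonneg C], fun a ha hle => ?_⟩
  have hd : ‖a‖ < δ := lt_of_le_of_lt (hle.trans (min_le_left _ _)) (by linarith)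
  have h1 := hball (y := 1 + a) (by simpa [dist_eq_norm] using hd)
  have hmul : a * riemannZeta (1 + a) = riemannZeta₁ (1 + a) := by
    rw [riemannZeta_eq_inv_sub_mul (by simpa using ha)]
    simp [ha]
  have h2 : ‖a * riemannZeta (1 + a) - 1‖ ≤ (|C| + 1) * ‖a‖ := by
    rw [hmul]
    refine h1.trans ?_
    rw [add_sub_cancel_left]
    gcongr
    linarith [le_abs_self C]
  have h3 : ‖a‖ ≤ 1 / (2 * (|C| + 1)) := hle.trans ((min_le_right _ _).trans (min_le_right _ _))
  have h4 : ‖a * riemannZeta (1 + a) - 1‖ ≤ 1 / 2 := by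
    refine h2.trans ?_
    rw [le_div_iff₀ (by positivity)] at h3
    linarith
  refine ⟨fun h0 => ?_, h2, h4⟩
  rw [h0] at h4
  norm_num at h4

theorem tendsto_log_rpow {ϑ : ℝ} (hϑ : 0 < ϑ) :
    Tendsto (fun X : ℝ => Real.log (X ^ ϑ)) atTop atTop :=
  Real.tendsto_log_atTop.comp (tendsto_rpow_atTop hϑ)

/-- `z₀` beats every power of `log R`. -/
theorem tendsto_log_rpow_mul_exp {ϑ : ℝ} (hϑ : 0 < ϑ) (s : ℝ) {b : ℝ} (hb : 0 < b) :
    Tendsto (fun X : ℝ => Real.log (X ^ ϑ) ^ s * Real.exp (-b * Real.log X ^ ((1 : ℝ) / 3)))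
      atTop (𝓝 0) := by
  have h1 := (tendsto_rpow_mul_exp_neg_mul_atTop_nhds_zero (3 * s) b hb).comp
    ((tendsto_rpow_atTop (by norm_num : (0 : ℝ) < 1 / 3)).comp Real.tendsto_log_atTop)
  have h2 := h1.const_mul (ϑ ^ s)
  rw [mul_zero] at h2
  refine h2.congr' ?_
  filter_upwards [eventually_ge_atTop 1] with X hX
  have hl := Real.log_nonneg hX
  simp only [Function.comp]
  rw [Real.log_rpow (by linarith), Real.mul_rpow hϑ.le hl, ← Real.rpow_mul hl, ← mul_assoc]
  congr 3
  ring

/-! ### Removal of `h` and `ℓ` -/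

theorem zeta_le_two_mul : ∃ L₀ : ℝ, 1 ≤ L₀ ∧ ∀ L : ℝ, L₀ ≤ L →
    ‖riemannZeta (1 + ((1 / L : ℝ) : ℂ))‖ ≤ 2 * L := by
  obtain ⟨δ, hδ, -, C, hC, H⟩ := exists_zeta_near_one
  refine ⟨max 1 (1 / δ), le_max_left _ _, fun L hL => ?_⟩
  have hL1 : 1 ≤ L := (le_max_left _ _).trans hL
  have hLδ : 1 / L ≤ δ := by
    rw [div_le_comm₀ (by linarith) hδ]; exact (le_max_right _ _).trans hL
  have hpos : 0 < 1 / L := by positivity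
  have hn : ‖((1 / L : ℝ) : ℂ)‖ = 1 / L := by rw [Complex.norm_real, Real.norm_of_nonneg hpos.le]
  obtain ⟨-, -, h⟩ := H ((1 / L : ℝ) : ℂ) (by exact_mod_cast hpos.ne') (by rw [hn]; exact hLδ)
  have h2 : ‖((1 / L : ℝ) : ℂ) * riemannZeta (1 + ((1 / L : ℝ) : ℂ))‖ ≤ 3 / 2 := by
    have := norm_le_norm_sub_add (((1 / L : ℝ) : ℂ) * riemannZeta (1 + ((1 / L : ℝ) : ℂ))) 1
    rw [norm_one] at this
    linarith
  rw [norm_mul, hn, div_mul_eq_mul_div, div_le_iff₀ (by linarith), one_mul] at h2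
  linarith

/-- A polynomial bound in `L = log R` for the Euler product controlling all absolute values:
for `p ≤ R` one has `1 / p ≤ 3 p ^ (-1 - 1 / L)`, so the product is at most `ζ(1 + 1 / L) ^ 9`. -/
theorem prod_three_le : ∃ L₀ : ℝ, 1 ≤ L₀ ∧ ∀ L : ℝ, L₀ ≤ L → ∀ P : Finset ℕ,
    (∀ p ∈ P, p.Prime ∧ Real.log p ≤ L) →
    ∏ p ∈ P, (1 + 3 * (1 / (p : ℝ))) ≤ (2 * L) ^ 9 := by
  obtain ⟨L₀, hL₀, H⟩ := zeta_le_two_mul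
  refine ⟨L₀, hL₀, fun L hL P hP => ?_⟩
  have hLpos : 0 < L := by linarith
  have h1 : ∏ p ∈ P, (1 + 3 * (1 / (p : ℝ))) ≤
      ∏ p ∈ P, (1 + (p : ℝ) ^ (-(1 + 1 / L))) ^ 9 := by
    refine Finset.prod_le_prod (fun p _ => by positivity) fun p hp => ?_
    have hp0 : (0 : ℝ) < p := by exact_mod_cast (hP p hp).1.pos
    set x := (p : ℝ) ^ (-(1 + 1 / L)) with hx
    have hx0 : 0 ≤ x := by positivity
    have hpx : 1 / (p : ℝ) ≤ 3 * x := by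
      have : x = 1 / (p : ℝ) * Real.exp (-(Real.log p / L)) := by
        rw [hx, Real.rpow_def_of_pos hp0, show Real.log p * -(1 + 1 / L) =
          -Real.log p + -(Real.log p / L) by ring, Real.exp_add, Real.exp_neg, Real.exp_log hp0,
          one_div]
      rw [this]
      have h3 : 1 / 3 ≤ Real.exp (-(Real.log p / L)) := by
        have h4 : Real.exp (-1) ≤ Real.exp (-(Real.log p / L)) := by
          rw [Real.exp_le_exp, neg_le_neg_iff, div_le_one hLpos]
          exact (hP p hp).2
        refine le_trans ?_ h4
        rw [Real.exp_neg, one_div]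
        exact inv_anti₀ (Real.exp_pos _) Real.exp_one_lt_three.le
      have : 0 < 1 / (p : ℝ) := by positivity
      nlinarith
    have := one_add_mul_le_pow (show -2 ≤ x by linarith) 9
    push_cast at this
    linarith
  refine h1.trans ?_
  rw [Finset.prod_pow]
  gcongr
  refine (prod_le_zeta P (fun p hp => (hP p hp).1) (by positivity : 0 < 1 / L)).trans ?_
  exact H L hL

theorem card_primeFactors_mul_log_two_le {ℓ : ℕ} (hℓ : 0 < ℓ) :
    (ℓ.primeFactors.card : ℝ) * Real.log 2 ≤ Real.log ℓ := by
  have h1 : 2 ^ ℓ.primeFactors.card ≤ ℓ :=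
    (Finset.pow_card_le_prod _ _ 2 fun p hp => (Nat.prime_of_mem_primeFactors hp).two_le).trans
      (Nat.le_of_dvd hℓ (Nat.prod_primeFactors_dvd ℓ))
  rw [← Real.log_pow]
  exact Real.log_le_log (by positivity) (by exact_mod_cast h1)

/-- The numerical step of `sieveForm_removal`, with `E` a bound for the savings over the trivial
estimate and `a` a power of `L`. -/
theorem removal_aux {C L E c Q T a : ℝ} (hQ : 0 ≤ Q) (hQL : Q ≤ (2 * L) ^ 9)
    (hT : T ≤ 2 * (c * (L * E))) (hc : 0 ≤ c * (L * E)) (ha : 0 ≤ a) :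
    C ^ 2 * (Q * T) * a ≤ C ^ 2 * 2 ^ 9 * (2 * c) * (L ^ 10 * a * E) := by
  have h1 : Q * T ≤ (2 * L) ^ 9 * (2 * (c * (L * E))) :=
    (mul_le_mul_of_nonneg_left hT hQ).trans (mul_le_mul_of_nonneg_right hQL (by positivity))
  calc C ^ 2 * (Q * T) * a ≤ C ^ 2 * ((2 * L) ^ 9 * (2 * (c * (L * E)))) * a := by gcongr
    _ = _ := by ring

/-- For primes `p ≥ e ^ y` half of the decay of `h` gives a small factor and the other half convergence;
the second term accounts for the primes dividing `ℓ`. -/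
theorem locWeight_sub_le {h : ℕ → ℝ} {ℓ p : ℕ} {ε Ch y : ℝ} (hℓ : 0 < ℓ) (hp : p.Prime)
    (hpy : Real.exp y ≤ p) (hh : |h p| ≤ Ch * (p : ℝ) ^ (-ε)) (hε : 0 ≤ ε) (hCh : 0 ≤ Ch) :
    |locWeight h ℓ p - 1 / (p : ℝ)| ≤
      Ch * Real.exp (-(ε / 2) * y) * (p : ℝ) ^ (-(1 + ε / 2)) +
        if p ∈ ℓ.primeFactors then Real.exp (-y) else 0 := by
  have hp0 : (0 : ℝ) < p := by exact_mod_cast hp.pos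
  rw [locWeight]
  split_ifs with h1 h2 h2
  · rw [zero_sub, abs_neg, abs_of_pos (by positivity), Real.exp_neg, one_div]
    have : (p : ℝ)⁻¹ ≤ (Real.exp y)⁻¹ := inv_anti₀ (Real.exp_pos _) hpy
    have : 0 ≤ Ch * Real.exp (-(ε / 2) * y) * (p : ℝ) ^ (-(1 + ε / 2)) := by positivity
    linarith
  · exact absurd (Nat.mem_primeFactors.2 ⟨hp, h1, hℓ.ne'⟩) h2
  · exact absurd (Nat.dvd_of_mem_primeFactors h2) h1
  · rw [← sub_div, add_sub_cancel_left, abs_div, abs_of_pos hp0, add_zero]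
    have h3 : (p : ℝ) ^ (-ε) / p = (p : ℝ) ^ (-(ε / 2)) * (p : ℝ) ^ (-(1 + ε / 2)) := by
      rw [← Real.rpow_add hp0, ← Real.rpow_sub_one hp0.ne']
      congr 1; ring
    have h4 : (p : ℝ) ^ (-(ε / 2)) ≤ Real.exp (-(ε / 2) * y) := by
      have : Real.exp (-(ε / 2) * y) = Real.exp y ^ (-(ε / 2)) := by
        rw [← Real.exp_mul, mul_comm]
      rw [this]
      exact Real.rpow_le_rpow_of_nonpos (Real.exp_pos _) hpy (by linarith)
    calc |h p| / p ≤ Ch * (p : ℝ) ^ (-ε) / p := by gcongr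
      _ = Ch * ((p : ℝ) ^ (-ε) / p) := by ring
      _ = Ch * (p : ℝ) ^ (-(ε / 2)) * (p : ℝ) ^ (-(1 + ε / 2)) := by rw [h3]; ring
      _ ≤ _ := by gcongr

set_option maxHeartbeats 1000000 in
/-- The function `h` and the modulus `ℓ` only involve primes beyond `z₀`, which exceeds any power
of `log R`: dropping both changes the sum by less than any negative power of `log R`. -/
theorem sieveForm_removal {ϑ : ℝ} (hϑ : 0 < ϑ) (G : ℝ → ℝ → ℝ)
    (hGbdd : ∃ C : ℝ, ∀ X t : ℝ, |G X t| ≤ C) (ε A K Ch : ℝ) (hε : 0 < ε) (hK : 0 < K)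
    (hCh : 0 < Ch) :
    ∃ X₀ : ℝ, ∀ X : ℝ, X₀ ≤ X →
      ∀ h : ℕ → ℝ, (∀ p : ℕ, p.Prime → |h p| ≤ Ch * (p : ℝ) ^ (-ε)) →
      ∀ ℓ : ℕ, 0 < ℓ → (ℓ : ℝ) ≤ X ^ K →
      |sieveForm (roughPrimes ⌊z0 X⌋₊ ⌊X ^ ϑ⌋₊) (locWeight h ℓ) (G X) (Real.log (X ^ ϑ)) -
        sieveForm (roughPrimes ⌊z0 X⌋₊ ⌊X ^ ϑ⌋₊) (fun p => 1 / (p : ℝ)) (G X)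
          (Real.log (X ^ ϑ))| ≤ Real.log (X ^ ϑ) ^ (-A) := by
  obtain ⟨C, hC⟩ := hGbdd
  obtain ⟨L₀, hL₀, hprod⟩ := prod_three_le
  set D := ∑' n : ℕ, (n : ℝ) ^ (-(1 + ε / 2)) with hD
  have hsum : Summable fun n : ℕ => (n : ℝ) ^ (-(1 + ε / 2)) :=
    Real.summable_nat_rpow.2 (by linarith)
  have hD0 : 0 ≤ D := tsum_nonneg fun n => by positivity
  set b := min (ε / 2) 1 with hb
  have hb0 : 0 < b := by positivity
  -- `c * L * exp (-b * y)` will bound the total change `3 ∑ e p` of the weights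
  set c := 3 * (Ch * D + K / ϑ / Real.log 2) with hc
  have hc0 : 0 ≤ c := by
    have := Real.log_pos one_lt_two
    positivity
  have lim1 := (tendsto_log_rpow_mul_exp hϑ 1 hb0).const_mul c
  have lim2 := (tendsto_log_rpow_mul_exp hϑ (10 + A) hb0).const_mul (C ^ 2 * 2 ^ 9 * (2 * c))
  rw [mul_zero] at lim1 lim2
  have ev : ∀ᶠ X : ℝ in atTop, 1 ≤ X ∧ L₀ ≤ Real.log (X ^ ϑ) ∧
      c * (Real.log (X ^ ϑ) ^ (1 : ℝ) * Real.exp (-b * Real.log X ^ ((1 : ℝ) / 3))) ≤ 1 ∧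
      C ^ 2 * 2 ^ 9 * (2 * c) * (Real.log (X ^ ϑ) ^ (10 + A) *
        Real.exp (-b * Real.log X ^ ((1 : ℝ) / 3))) ≤ 1 := by
    filter_upwards [eventually_ge_atTop 1, (tendsto_log_rpow hϑ).eventually_ge_atTop L₀,
      lim1.eventually_le_const one_pos, lim2.eventually_le_const one_pos] with X h1 h2 h3 h4
    exact ⟨h1, h2, h3, h4⟩
  obtain ⟨X₀, hX₀⟩ := eventually_atTop.1 ev
  refine ⟨X₀, fun X hX h hh ℓ hℓ hℓX => ?_⟩
  obtain ⟨hX1, hL, hδ1, hδ2⟩ := hX₀ X hX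
  set L := Real.log (X ^ ϑ) with hLdef
  set y := Real.log X ^ ((1 : ℝ) / 3) with hy
  have hXpos : 0 < X := by linarith
  have hlogX : 0 ≤ Real.log X := Real.log_nonneg hX1
  have hy0 : 0 ≤ y := by positivity
  have hLpos : 0 < L := by linarith
  have hLX : Real.log X = L / ϑ := by
    rw [hLdef, Real.log_rpow hXpos]; field_simp
  have hz : z0 X = Real.exp y := rfl
  set P := roughPrimes ⌊z0 X⌋₊ ⌊X ^ ϑ⌋₊ with hP
  have hPp : ∀ p ∈ P, p.Prime ∧ Real.exp y < p ∧ Real.log p ≤ L := by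
    intro p hp
    obtain ⟨⟨h1, h2⟩, h3⟩ := mem_roughPrimes.1 hp
    refine ⟨h3, hz ▸ Nat.lt_of_floor_lt h1, ?_⟩
    refine Real.log_le_log (by exact_mod_cast h3.pos) ?_
    exact (Nat.le_floor_iff (by positivity)).1 h2
  set e : ℕ → ℝ := fun p => Ch * Real.exp (-(ε / 2) * y) * (p : ℝ) ^ (-(1 + ε / 2)) +
    if p ∈ ℓ.primeFactors then Real.exp (-y) else 0 with he
  have hsub := sieveForm_sub_le P (locWeight h ℓ) (fun p => 1 / (p : ℝ)) e (G X) L C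
    (fun p _ => by positivity) (fun p hp => ?_) (hC X)
  · refine hsub.trans ?_
    have hpr := hprod L hL P fun p hp => ⟨(hPp p hp).1, (hPp p hp).2.2⟩
    set E := Real.exp (-b * y) with hE
    have hE1 : Real.exp (-(ε / 2) * y) ≤ E := by
      rw [hE, Real.exp_le_exp]
      have : b ≤ ε / 2 := min_le_left _ _
      nlinarith
    have hE2 : Real.exp (-y) ≤ E := by
      rw [hE, Real.exp_le_exp]
      have : b ≤ 1 := min_le_right _ _
      nlinarith
    have hE0 : 0 < E := Real.exp_pos _
    have hes : 3 * ∑ p ∈ P, e p ≤ c * (L ^ (1 : ℝ) * E) := by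
      have s1 : ∑ p ∈ P, (p : ℝ) ^ (-(1 + ε / 2)) ≤ D :=
        hsum.sum_le_tsum _ fun n _ => by positivity
      have s2 : ∑ p ∈ P, (if p ∈ ℓ.primeFactors then Real.exp (-y) else 0) ≤
          K / ϑ / Real.log 2 * L * E := by
        rw [← Finset.sum_filter, Finset.sum_const, nsmul_eq_mul]
        have h2 : 0 < Real.log 2 := Real.log_pos one_lt_two
        have h3 : ((P.filter (· ∈ ℓ.primeFactors)).card : ℝ) ≤ ℓ.primeFactors.card := by
          exact_mod_cast Finset.card_le_card fun p hp => (Finset.mem_filter.1 hp).2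
        have h4 := card_primeFactors_mul_log_two_le hℓ
        have h5 : Real.log ℓ ≤ K * Real.log X := by
          rw [← Real.log_rpow hXpos]
          exact Real.log_le_log (by exact_mod_cast hℓ) hℓX
        have h6 : ((P.filter (· ∈ ℓ.primeFactors)).card : ℝ) ≤ K / ϑ / Real.log 2 * L := by
          rw [show K / ϑ / Real.log 2 * L = K * (L / ϑ) / Real.log 2 by ring, ← hLX,
            le_div_iff₀ h2]
          nlinarith
        gcongr
      rw [he, Finset.sum_add_distrib, ← Finset.mul_sum, hc, Real.rpow_one]
      have t1 : Ch * Real.exp (-(ε / 2) * y) * ∑ p ∈ P, (p : ℝ) ^ (-(1 + ε / 2)) ≤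
          Ch * E * D := by gcongr
      have t2 : Ch * E * D ≤ Ch * E * D * L :=
        le_mul_of_one_le_right (by positivity) (by linarith)
      nlinarith
    have hexp : Real.exp (3 * ∑ p ∈ P, e p) - 1 ≤ 2 * (c * (L * E)) := by
      rw [Real.rpow_one] at hδ1 hes
      have h0 : 0 ≤ c * (L * E) := by positivity
      have h1 : Real.exp (c * (L * E)) - 1 ≤ 2 * (c * (L * E)) := by
        have := Real.abs_exp_sub_one_le (x := c * (L * E)) (by rw [abs_of_nonneg h0]; exact hδ1)
        rw [abs_of_nonneg h0] at this
        exact (le_abs_self _).trans this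
      have := Real.exp_le_exp.2 hes
      linarith
    have hpow : L ^ (10 + A) = L ^ 10 * L ^ A := by
      rw [Real.rpow_add hLpos]; norm_cast
    rw [Real.rpow_neg hLpos.le, ← one_div, le_div_iff₀ (by positivity)]
    refine le_trans ?_ hδ2
    rw [hpow]
    have hpp : 0 ≤ ∏ p ∈ P, (1 + 3 * (1 / (p : ℝ))) :=
      Finset.prod_nonneg fun p _ => by positivity
    exact removal_aux hpp hpr hexp (by positivity) (by positivity)
  · exact locWeight_sub_le hℓ (hPp p hp).1 (hPp p hp).2.1.le (hh p (hPp p hp).1) hε.le hCh.le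

/-! ### Euler products over rough primes -/

/-- The complex number `p ^ (-(1 + a))`. -/
noncomputable def eulerX (a : ℂ) (p : ℕ) : ℂ := (p : ℂ) ^ (-(1 + a))

/-- `V(W) = ∏_{p ≤ W} (1 - 1/p)`. -/
noncomputable def mertensV (W : ℕ) : ℝ := ∏ p ∈ (Finset.Iic W).filter Nat.Prime, (1 - 1 / (p : ℝ))

/-- The local factor at `p` of the double Dirichlet series
`∑ μ(m) μ(n) / ([m, n] m ^ a n ^ b)`. -/
noncomputable def locF (a b : ℂ) (p : ℕ) : ℂ := 1 + (-eulerX a p - eulerX b p + eulerX (a + b) p)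

/-- The normalised Euler product `(a / V(W)) ∏_{p > W} (1 - p ^ (-1 - a))⁻¹`, written as
`a ζ(1 + a) ∏_{p ≤ W} (1 - p ^ (-1 - a)) / (1 - 1 / p)`. It tends to `1` as `a → 0`. -/
noncomputable def roughU (W : ℕ) (a : ℂ) : ℂ :=
  a * riemannZeta (1 + a) *
    ∏ p ∈ (Finset.Iic W).filter Nat.Prime, ((1 - eulerX a p) / (1 - 1 / (p : ℂ)))

theorem eulerX_eq {p : ℕ} (hp : p ≠ 0) (a : ℂ) :
    eulerX a p = (p : ℂ)⁻¹ * Complex.exp (-(a * Real.log p)) := by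
  have hp' : (p : ℂ) ≠ 0 := by exact_mod_cast hp
  rw [eulerX, neg_add, Complex.cpow_add _ _ hp', Complex.cpow_neg_one, Complex.cpow_def_of_ne_zero hp',
    Complex.natCast_log]
  congr 2; ring

theorem norm_eulerX {p : ℕ} (hp : 0 < p) (a : ℂ) : ‖eulerX a p‖ = (p : ℝ) ^ (-(1 + a.re)) := by
  rw [eulerX, Complex.norm_natCast_cpow_of_pos hp]
  simp

theorem norm_eulerX_le {p : ℕ} (hp : 0 < p) {a : ℂ} (ha : 0 ≤ a.re) : ‖eulerX a p‖ ≤ 1 / p := by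
  rw [norm_eulerX hp, one_div, ← Real.rpow_neg_one]
  exact Real.rpow_le_rpow_of_exponent_le (by exact_mod_cast hp) (by linarith)

theorem norm_eulerX_le_half {p : ℕ} (hp : p.Prime) {a : ℂ} (ha : 0 ≤ a.re) :
    ‖eulerX a p‖ ≤ 1 / 2 := by
  refine (norm_eulerX_le hp.pos ha).trans ?_
  have : (2 : ℝ) ≤ p := by exact_mod_cast hp.two_le
  gcongr

theorem half_le_norm_one_sub {x : ℂ} (hx : ‖x‖ ≤ 1 / 2) : 1 / 2 ≤ ‖1 - x‖ := by
  have := norm_sub_norm_le (1 : ℂ) x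
  rw [norm_one] at this
  linarith

theorem one_sub_ne_zero_of_half {x : ℂ} (hx : ‖x‖ ≤ 1 / 2) : 1 - x ≠ 0 := by
  have := half_le_norm_one_sub hx
  intro h0
  rw [h0, norm_zero] at this
  norm_num at this

theorem mertensV_pos (W : ℕ) : 0 < mertensV W := by
  refine Finset.prod_pos fun p hp => ?_
  have : (2 : ℝ) ≤ p := by exact_mod_cast (Finset.mem_filter.1 hp).2.two_le
  have : 1 / (p : ℝ) ≤ 1 / 2 := by gcongr
  linarith

theorem mertensV_le_one (W : ℕ) : mertensV W ≤ 1 := by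
  refine Finset.prod_le_one (fun p hp => ?_) fun p hp => ?_
  · have : (2 : ℝ) ≤ p := by exact_mod_cast (Finset.mem_filter.1 hp).2.two_le
    have : 1 / (p : ℝ) ≤ 1 / 2 := by gcongr
    linarith
  · have : 0 ≤ 1 / (p : ℝ) := by positivity
    linarith

/-- The Euler product of `1 / ζ(1 + a)` over the primes beyond `W`, in terms of `roughU`. -/
theorem tendsto_roughProd (W : ℕ) {a : ℂ} (ha : 0 < a.re) :
    Tendsto (fun Y => ∏ p ∈ roughPrimes W Y, (1 - eulerX a p)) atTop
      (𝓝 (a / (mertensV W * roughU W a))) := by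
  have hs : 1 < (1 + a).re := by simpa using ha
  have hz : riemannZeta (1 + a) ≠ 0 := riemannZeta_ne_zero_of_one_lt_re hs
  have ha0 : a ≠ 0 := by rintro rfl; simp at ha
  have h1 := ((riemannZeta_eulerProduct hs).comp (tendsto_add_atTop_nat 1)).inv₀ hz
  set Q := ∏ p ∈ (Finset.Iic W).filter Nat.Prime, (1 - eulerX a p) with hQ
  have hQ0 : Q ≠ 0 := Finset.prod_ne_zero_iff.2 fun p hp =>
    one_sub_ne_zero_of_half (norm_eulerX_le_half (Finset.mem_filter.1 hp).2 ha.le)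
  have h2 := h1.div_const Q
  have hval : (riemannZeta (1 + a))⁻¹ / Q = a / (mertensV W * roughU W a) := by
    have hV : (mertensV W : ℂ) ≠ 0 := by exact_mod_cast (mertensV_pos W).ne'
    have hVc : ((mertensV W : ℝ) : ℂ) = ∏ p ∈ (Finset.Iic W).filter Nat.Prime, (1 - 1 / (p : ℂ)) := by
      rw [mertensV]; push_cast; rfl
    rw [roughU, Finset.prod_div_distrib, ← hVc]
    field_simp
    rw [← hQ, div_self hQ0]
  rw [hval] at h2
  refine h2.congr' ?_
  filter_upwards [eventually_ge_atTop W] with Y hY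
  have hsplit : (Y + 1).primesBelow = (Finset.Iic W).filter Nat.Prime ∪ roughPrimes W Y := by
    ext p
    simp only [Nat.mem_primesBelow, Finset.mem_union, Finset.mem_filter, Finset.mem_Iic,
      mem_roughPrimes]
    constructor
    · rintro ⟨h1, h2⟩
      by_cases h : p ≤ W
      · exact Or.inl ⟨h, h2⟩
      · exact Or.inr ⟨⟨by omega, by omega⟩, h2⟩
    · rintro (⟨h1, h2⟩ | ⟨⟨-, h1⟩, h2⟩)
      · exact ⟨by omega, h2⟩
      · exact ⟨by omega, h2⟩
  have hdisj : Disjoint ((Finset.Iic W).filter Nat.Prime) (roughPrimes W Y) := by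
    rw [Finset.disjoint_left]
    intro p hp hp'
    have := (Finset.mem_Iic.1 (Finset.mem_filter.1 hp).1)
    have := (mem_roughPrimes.1 hp').1.1
    omega
  simp only [Function.comp, hsplit]
  rw [← Finset.prod_inv_distrib, Finset.prod_union hdisj]
  simp only [inv_inv]
  change (Q * ∏ x ∈ roughPrimes W Y, (1 - eulerX a x)) / Q = _
  rw [mul_div_cancel_left₀ _ hQ0]

theorem sum_inv_primes_le (W : ℕ) :
    ∑ p ∈ (Finset.Iic W).filter Nat.Prime, 1 / (p : ℝ) ≤ 1 + Real.log W := by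
  refine le_trans ?_ (harmonic_le_one_add_log W)
  rw [harmonic_eq_sum_Icc]
  push_cast
  refine Finset.sum_le_sum_of_subset_of_nonneg ?_ ?_ |>.trans_eq
    (Finset.sum_congr rfl fun p _ => one_div _)
  · intro p hp
    obtain ⟨h1, h2⟩ := Finset.mem_filter.1 hp
    exact Finset.mem_Icc.2 ⟨h2.one_le, Finset.mem_Iic.1 h1⟩
  · intro p _ _
    positivity

/-- `roughU W a` is close to `1` as soon as `|a| (1 + log W) ^ 2` is small; this uses only the
trivial bound `∑_{p ≤ W} (log p) / p ≤ (1 + log W) ^ 2`. -/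
theorem exists_roughU_bound : ∃ c : ℝ, 0 < c ∧ ∃ C : ℝ, 0 < C ∧ ∀ (W : ℕ) (a : ℂ), 1 ≤ W →
    a ≠ 0 → 0 ≤ a.re → ‖a‖ * (1 + Real.log W) ^ 2 ≤ c →
    ‖roughU W a - 1‖ ≤ C * (‖a‖ * (1 + Real.log W) ^ 2) := by
  obtain ⟨δ, hδ, -, C, hC, H⟩ := exists_zeta_near_one
  refine ⟨min δ (1 / 4), by positivity, 8 + 3 * C, by linarith, fun W a hW ha har hle => ?_⟩
  have hlog : 0 ≤ Real.log W := Real.log_natCast_nonneg W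
  set κ := (1 + Real.log W) ^ 2 with hκ
  have hκ1 : 1 ≤ κ := by rw [hκ]; nlinarith
  have haκ : ‖a‖ ≤ ‖a‖ * κ := le_mul_of_one_le_right (norm_nonneg _) hκ1
  have h4 : ‖a‖ * κ ≤ 1 / 4 := hle.trans (min_le_right _ _)
  obtain ⟨-, hz, -⟩ := H a ha (haκ.trans (hle.trans (min_le_left _ _)))
  set S := (Finset.Iic W).filter Nat.Prime with hS
  set t : ℕ → ℂ := fun p => (1 / (p : ℂ) - eulerX a p) / (1 - 1 / (p : ℂ)) with ht
  have hnorm_inv : ∀ p : ℕ, p.Prime → ‖1 / (p : ℂ)‖ ≤ 1 / 2 := by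
    intro p hp
    have : (2 : ℝ) ≤ p := by exact_mod_cast hp.two_le
    rw [norm_div, norm_one, Complex.norm_natCast]
    gcongr
  have hprod : ∏ p ∈ S, ((1 - eulerX a p) / (1 - 1 / (p : ℂ))) = ∏ p ∈ S, (1 + t p) := by
    refine Finset.prod_congr rfl fun p hp => ?_
    have := one_sub_ne_zero_of_half (hnorm_inv p (Finset.mem_filter.1 hp).2)
    rw [ht]
    field_simp
    ring
  have ht_le : ∀ p ∈ S, ‖t p‖ ≤ 4 * (‖a‖ * Real.log W) * (1 / p) := by
    intro p hp
    obtain ⟨hpW, hpp⟩ := Finset.mem_filter.1 hp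
    have hpW := Finset.mem_Iic.1 hpW
    have hp0 : (0 : ℝ) < p := by exact_mod_cast hpp.pos
    have hlogp : 0 ≤ Real.log p := Real.log_natCast_nonneg p
    have hlp : Real.log p ≤ Real.log W := Real.log_le_log hp0 (by exact_mod_cast hpW)
    have hn : ‖-(a * (Real.log p : ℂ))‖ = ‖a‖ * Real.log p := by
      rw [norm_neg, norm_mul, Complex.norm_real, Real.norm_of_nonneg hlogp]
    have h1 : ‖Complex.exp (-(a * (Real.log p : ℂ))) - 1‖ ≤ 2 * (‖a‖ * Real.log p) := by
      rw [← hn]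
      refine Complex.norm_exp_sub_one_le ?_
      rw [hn]
      refine le_trans (mul_le_mul_of_nonneg_left (?_ : _ ≤ κ) (norm_nonneg _)) (h4.trans (by norm_num))
      rw [hκ]; nlinarith
    have h2 : ‖1 / (p : ℂ) - eulerX a p‖ ≤ 1 / p * (2 * (‖a‖ * Real.log p)) := by
      rw [eulerX_eq hpp.ne_zero, show 1 / (p : ℂ) - (p : ℂ)⁻¹ * Complex.exp (-(a * Real.log p)) =
        -((p : ℂ)⁻¹ * (Complex.exp (-(a * Real.log p)) - 1)) by ring, norm_neg, norm_mul, norm_inv,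
        Complex.norm_natCast, one_div]
      gcongr
    rw [ht, norm_div, div_le_iff₀ (by linarith [half_le_norm_one_sub (hnorm_inv p hpp)])]
    have h3 := half_le_norm_one_sub (hnorm_inv p hpp)
    calc ‖1 / (p : ℂ) - eulerX a p‖ ≤ 1 / p * (2 * (‖a‖ * Real.log p)) := h2
      _ ≤ 1 / p * (2 * (‖a‖ * Real.log W)) := by gcongr
      _ = 4 * (‖a‖ * Real.log W) * (1 / p) * (1 / 2) := by ring
      _ ≤ _ := by gcongr
  have hsum : ∑ p ∈ S, ‖t p‖ ≤ 4 * (‖a‖ * κ) := by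
    refine (Finset.sum_le_sum ht_le).trans ?_
    rw [← Finset.mul_sum]
    calc 4 * (‖a‖ * Real.log W) * ∑ p ∈ S, 1 / (p : ℝ)
        ≤ 4 * (‖a‖ * Real.log W) * (1 + Real.log W) := by gcongr; exact sum_inv_primes_le W
      _ ≤ 4 * (‖a‖ * κ) := by
          rw [hκ, mul_assoc, mul_assoc]
          gcongr
          nlinarith
  have hT : ‖∏ p ∈ S, (1 + t p) - 1‖ ≤ 8 * (‖a‖ * κ) := by
    refine (Finset.norm_prod_one_add_sub_one_le S t).trans ?_
    have h1 := Real.exp_le_exp.2 hsum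
    have h2 := Real.abs_exp_sub_one_le (x := 4 * (‖a‖ * κ))
      (by rw [abs_of_nonneg (by positivity)]; linarith)
    rw [abs_of_nonneg (by positivity : 0 ≤ 4 * (‖a‖ * κ))] at h2
    linarith [le_abs_self (Real.exp (4 * (‖a‖ * κ)) - 1)]
  rw [roughU, hprod]
  set z := a * riemannZeta (1 + a)
  set T := ∏ p ∈ S, (1 + t p)
  have hT3 : ‖T‖ ≤ 3 := by
    have := norm_le_norm_sub_add T 1
    rw [norm_one] at this
    linarith
  calc ‖z * T - 1‖ = ‖(T - 1) + (z - 1) * T‖ := by ring_nf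
    _ ≤ ‖T - 1‖ + ‖z - 1‖ * ‖T‖ := (norm_add_le _ _).trans (by rw [norm_mul])
    _ ≤ 8 * (‖a‖ * κ) + C * ‖a‖ * 3 := by gcongr
    _ ≤ 8 * (‖a‖ * κ) + C * (‖a‖ * κ) * 3 := by gcongr
    _ = _ := by ring

/-! ### Asymptotics of the Euler product -/

/-- Comparison of the local factor with that of `ζ(1 + a + b) / (ζ(1 + a) ζ(1 + b))`. -/
theorem exists_locF_ratio {p : ℕ} (hp : p.Prime) {a b : ℂ} (ha : 0 ≤ a.re) (hb : 0 ≤ b.re) :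
    ∃ t : ℂ, ‖t‖ ≤ 16 * ((p : ℝ) ^ 2)⁻¹ ∧
      locF a b p * (1 - eulerX (a + b) p) =
        (1 - eulerX a p) * (1 - eulerX b p) * (1 + t) := by
  have hab : 0 ≤ (a + b).re := by simp only [Complex.add_re]; linarith
  have hxa := norm_eulerX_le hp.pos ha
  have hxb := norm_eulerX_le hp.pos hb
  have hxab := norm_eulerX_le hp.pos hab
  have ha2 := half_le_norm_one_sub (norm_eulerX_le_half hp ha)
  have hb2 := half_le_norm_one_sub (norm_eulerX_le_half hp hb)
  have ha0 := one_sub_ne_zero_of_half (norm_eulerX_le_half hp ha)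
  have hb0 := one_sub_ne_zero_of_half (norm_eulerX_le_half hp hb)
  rw [locF]
  set x := eulerX a p
  set y := eulerX b p
  set z := eulerX (a + b) p
  set r := 1 / (p : ℝ) with hr
  have hr0 : 0 ≤ r := by positivity
  refine ⟨(z * (x + y - z) - x * y) / ((1 - x) * (1 - y)), ?_, ?_⟩
  · have h1 : ‖z * (x + y - z) - x * y‖ ≤ 4 * r ^ 2 := by
      calc ‖z * (x + y - z) - x * y‖ ≤ ‖z‖ * (‖x‖ + ‖y‖ + ‖z‖) + ‖x‖ * ‖y‖ := by
            refine (norm_sub_le _ _).trans ?_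
            rw [norm_mul, norm_mul]
            gcongr
            exact (norm_sub_le _ _).trans (by gcongr; exact norm_add_le _ _)
        _ ≤ r * (r + r + r) + r * r := by gcongr
        _ = 4 * r ^ 2 := by ring
    have hden : 1 / 4 ≤ ‖1 - x‖ * ‖1 - y‖ := by nlinarith
    rw [norm_div, norm_mul, div_le_iff₀ (by linarith)]
    have h2 : ((p : ℝ) ^ 2)⁻¹ = r ^ 2 := by rw [hr]; simp
    rw [h2]
    nlinarith [sq_nonneg r]
  · field_simp
    ring

theorem norm_locF_sub_one_le {p : ℕ} (hp : 0 < p) {a b : ℂ} {σ : ℝ} (hσ : 0 ≤ σ)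
    (ha : a.re = σ) (hb : b.re = σ) :
    ‖locF a b p - 1‖ ≤ 3 * (p : ℝ) ^ (-(1 + σ)) := by
  have h1 : (p : ℝ) ^ (-(1 + (a + b).re)) ≤ (p : ℝ) ^ (-(1 + σ)) :=
    Real.rpow_le_rpow_of_exponent_le (by exact_mod_cast hp)
      (by simp only [Complex.add_re, ha, hb]; linarith)
  rw [locF, add_sub_cancel_left]
  refine (norm_add_le _ _).trans ?_
  have h2 := norm_sub_le (-eulerX a p) (eulerX b p)
  rw [norm_neg, norm_eulerX hp, norm_eulerX hp, ha, hb] at h2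
  rw [norm_eulerX hp]
  linarith

/-- The Euler product over the primes beyond `W` converges. -/
theorem exists_tendsto_locF (W : ℕ) {a b : ℂ} {σ : ℝ} (hσ : 0 < σ) (ha : a.re = σ)
    (hb : b.re = σ) :
    ∃ F : ℂ, Tendsto (fun Y => ∏ p ∈ roughPrimes W Y, locF a b p) atTop (𝓝 F) := by
  classical
  set f : ℕ → ℂ := fun n => if W < n ∧ n.Prime then locF a b n - 1 else 0 with hf
  have hsum : Summable fun n => ‖f n‖ := by
    refine Summable.of_nonneg_of_le (fun _ => norm_nonneg _) (fun n => ?_)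
      ((Real.summable_nat_rpow.2 (by linarith : -(1 + σ) < -1)).mul_left 3)
    by_cases h : W < n ∧ n.Prime
    · rw [hf]
      simp only [h, and_self, if_true]
      exact norm_locF_sub_one_le h.2.pos hσ.le ha hb
    · rw [hf]
      simp only [h, if_false, norm_zero]
      positivity
  refine ⟨_, ((multipliable_one_add_of_summable hsum).tendsto_prod_tprod_nat.comp
    (tendsto_add_atTop_nat 1)).congr fun Y => ?_⟩
  have : roughPrimes W Y = (Finset.range (Y + 1)).filter fun n => W < n ∧ n.Prime := by
    ext p
    simp only [mem_roughPrimes, Finset.mem_filter, Finset.mem_range]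
    constructor
    · rintro ⟨⟨h1, h2⟩, h3⟩; exact ⟨by omega, h1, h3⟩
    · rintro ⟨h1, h2, h3⟩; exact ⟨⟨h2, by omega⟩, h3⟩
  rw [Function.comp, this, Finset.prod_filter]
  refine Finset.prod_congr rfl fun n _ => ?_
  rw [hf]
  by_cases h : W < n ∧ n.Prime
  · simp only [h, and_self, if_true]; ring
  · simp only [h, if_false]; ring

/-- A bound for the Euler product that needs no restriction on the imaginary parts of `a` and `b`. -/
theorem norm_prod_locF_le {W Y : ℕ} {a b : ℂ} {σ : ℝ} (hσ : 0 < σ)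
    (ha : a.re = σ) (hb : b.re = σ) :
    ‖∏ p ∈ roughPrimes W Y, locF a b p‖ ≤ ‖riemannZeta (1 + σ)‖ ^ 3 := by
  rw [norm_prod]
  calc ∏ p ∈ roughPrimes W Y, ‖locF a b p‖
      ≤ ∏ p ∈ roughPrimes W Y, (1 + (p : ℝ) ^ (-(1 + σ))) ^ 3 := by
        refine Finset.prod_le_prod (fun _ _ => norm_nonneg _) fun p hp => ?_
        have h1 := norm_locF_sub_one_le (mem_roughPrimes.1 hp).2.pos hσ.le ha hb
        have h2 := norm_le_norm_sub_add (locF a b p) 1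
        rw [norm_one] at h2
        have h3 : 0 ≤ (p : ℝ) ^ (-(1 + σ)) := by positivity
        have h4 := one_add_mul_le_pow (show -2 ≤ (p : ℝ) ^ (-(1 + σ)) by linarith) 3
        push_cast at h4
        linarith
    _ ≤ _ := by
        rw [Finset.prod_pow]
        have := prod_le_zeta (roughPrimes W Y) (fun p hp => (mem_roughPrimes.1 hp).2) hσ
        gcongr

/-- The Euler product of `locF` agrees, up to a relative error `O(1 / W)`, with that of
`ζ(1 + a + b) / (ζ(1 + a) ζ(1 + b))`. -/
theorem norm_prod_locF_sub_le {W Y : ℕ} (hW : 16 ≤ W) (hY : W ≤ Y) {a b : ℂ} (ha : 0 ≤ a.re)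
    (hb : 0 ≤ b.re) :
    ‖∏ p ∈ roughPrimes W Y, locF a b p -
      (∏ p ∈ roughPrimes W Y, (1 - eulerX a p)) * (∏ p ∈ roughPrimes W Y, (1 - eulerX b p)) /
        ∏ p ∈ roughPrimes W Y, (1 - eulerX (a + b) p)‖ ≤
    32 / W * ‖(∏ p ∈ roughPrimes W Y, (1 - eulerX a p)) *
      (∏ p ∈ roughPrimes W Y, (1 - eulerX b p)) /
        ∏ p ∈ roughPrimes W Y, (1 - eulerX (a + b) p)‖ := by
  classical
  set P := roughPrimes W Y with hP
  have hab : 0 ≤ (a + b).re := by simp only [Complex.add_re]; linarith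
  have hex : ∀ p : ℕ, ∃ t : ℂ, p ∈ P → ‖t‖ ≤ 16 * ((p : ℝ) ^ 2)⁻¹ ∧
      locF a b p * (1 - eulerX (a + b) p) =
        (1 - eulerX a p) * (1 - eulerX b p) * (1 + t) := by
    intro p
    by_cases hp : p ∈ P
    · obtain ⟨t, ht⟩ := exists_locF_ratio (mem_roughPrimes.1 hp).2 ha hb
      exact ⟨t, fun _ => ht⟩
    · exact ⟨0, fun h => absurd h hp⟩
  choose t ht using hex
  set D := ∏ p ∈ P, (1 - eulerX (a + b) p)
  have hD : D ≠ 0 := Finset.prod_ne_zero_iff.2 fun p hp =>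
    one_sub_ne_zero_of_half (norm_eulerX_le_half (mem_roughPrimes.1 hp).2 hab)
  have hmul : ∏ p ∈ P, locF a b p = (∏ p ∈ P, (1 - eulerX a p)) *
      (∏ p ∈ P, (1 - eulerX b p)) / D * ∏ p ∈ P, (1 + t p) := by
    rw [div_mul_eq_mul_div, eq_div_iff hD, ← Finset.prod_mul_distrib, ← Finset.prod_mul_distrib,
      ← Finset.prod_mul_distrib]
    exact Finset.prod_congr rfl fun p hp => (ht p hp).2
  have hW0 : (16 : ℝ) ≤ W := by exact_mod_cast hW
  have hsum : ∑ p ∈ P, ‖t p‖ ≤ 16 / W := by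
    calc ∑ p ∈ P, ‖t p‖ ≤ ∑ p ∈ P, 16 * ((p : ℝ) ^ 2)⁻¹ := Finset.sum_le_sum fun p hp => (ht p hp).1
      _ ≤ ∑ p ∈ Finset.Ioc W Y, 16 * ((p : ℝ) ^ 2)⁻¹ :=
          Finset.sum_le_sum_of_subset_of_nonneg (Finset.filter_subset _ _) fun _ _ _ => by positivity
      _ ≤ 16 / W := by
          rw [← Finset.mul_sum, div_eq_mul_inv]
          have h1 := sum_Ioc_inv_sq_le_sub (α := ℝ) (by omega : W ≠ 0) hY
          have h2 : 0 ≤ (Y : ℝ)⁻¹ := by positivity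
          gcongr
          linarith
  have hT : ‖∏ p ∈ P, (1 + t p) - 1‖ ≤ 32 / W := by
    refine (Finset.norm_prod_one_add_sub_one_le P t).trans ?_
    have h1 := Real.exp_le_exp.2 hsum
    have h0 : 0 ≤ 16 / (W : ℝ) := by positivity
    have h2 := Real.abs_exp_sub_one_le (x := 16 / (W : ℝ))
      (by rw [abs_of_nonneg h0, div_le_one (by linarith)]; linarith)
    rw [abs_of_nonneg h0] at h2
    have h3 : 2 * (16 / (W : ℝ)) = 32 / W := by ring
    linarith [le_abs_self (Real.exp (16 / (W : ℝ)) - 1)]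
  rw [hmul, ← mul_sub_one, norm_mul, mul_comm]
  gcongr

theorem roughU_ratio {u v w : ℂ} {d e f : ℝ} (hu : ‖u - 1‖ ≤ d) (hv : ‖v - 1‖ ≤ e)
    (hw : ‖w - 1‖ ≤ f) (hd : d ≤ 1 / 4) (he : e ≤ 1 / 4) :
    ‖w / (u * v) - 1‖ ≤ 3 * (d + e + f) := by
  have hu1 : 3 / 4 ≤ ‖u‖ := by
    have := norm_sub_norm_le (1 : ℂ) u
    rw [norm_one, norm_sub_rev] at this; linarith
  have hv1 : 3 / 4 ≤ ‖v‖ := by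
    have := norm_sub_norm_le (1 : ℂ) v
    rw [norm_one, norm_sub_rev] at this; linarith
  have hu0 : u ≠ 0 := by rintro rfl; norm_num at hu1
  have hv0 : v ≠ 0 := by rintro rfl; norm_num at hv1
  have hd0 := (norm_nonneg _).trans hu
  have he0 := (norm_nonneg _).trans hv
  have hf0 := (norm_nonneg _).trans hw
  have h1 : w / (u * v) - 1 = ((w - 1) - (u - 1) - (v - 1) - (u - 1) * (v - 1)) / (u * v) := by
    field_simp; ring
  have h2 : 9 / 16 ≤ ‖u‖ * ‖v‖ := by nlinarith
  rw [h1, norm_div, norm_mul, div_le_iff₀ (by linarith)]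
  have h3 : ‖(w - 1) - (u - 1) - (v - 1) - (u - 1) * (v - 1)‖ ≤ f + d + e + d * e := by
    refine (norm_sub_le _ _).trans (add_le_add ?_ ?_)
    · exact (norm_sub_le _ _).trans (add_le_add ((norm_sub_le _ _).trans (add_le_add hw hu)) hv)
    · rw [norm_mul]; gcongr
  nlinarith

theorem one_le_norm_of_re {a : ℂ} (ha : a.re = 1) : 1 ≤ ‖a‖ := by
  have := Complex.abs_re_le_norm a
  rw [ha, abs_one] at this
  exact this

theorem norm_main_le {a b : ℂ} (ha : a.re = 1) (hb : b.re = 1) :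
    ‖a * b / (a + b)‖ ≤ ‖a‖ * ‖b‖ := by
  have h := Complex.abs_re_le_norm (a + b)
  rw [Complex.add_re, ha, hb] at h
  norm_num at h
  rw [norm_div, norm_mul]
  exact div_le_self (by positivity) (by linarith)

/-- Pointwise evaluation of the Euler product over all primes beyond `W` at `(a / L, b / L)`, for `a` and `b`
on the line `Re s = 1`. The price for having no restriction on the imaginary parts is the high power of
`‖a‖ ‖b‖`, to be absorbed by the decay of a Fourier transform. -/
theorem exists_locF_limit : ∃ C : ℝ, 0 < C ∧ ∃ L₀ : ℝ, 1 ≤ L₀ ∧ ∀ (L : ℝ) (W : ℕ), L₀ ≤ L →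
    16 ≤ W → ∀ a b : ℂ, a.re = 1 → b.re = 1 →
    (∀ Y, ‖∏ p ∈ roughPrimes W Y, locF (a / L) (b / L) p‖ ≤ (2 * L) ^ 3) ∧
    ∃ F : ℂ, Tendsto (fun Y => ∏ p ∈ roughPrimes W Y, locF (a / L) (b / L) p) atTop (𝓝 F) ∧
      ‖L * mertensV W * F - a * b / (a + b)‖ ≤
        C * ((1 + Real.log W) ^ 2 / L + 1 / W + L ^ 4 * ((1 + Real.log W) ^ 2 / L) ^ 15) *
          (‖a‖ * ‖b‖) ^ 16 := by
  obtain ⟨c, hc, C, hC, HU⟩ := exists_roughU_bound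
  obtain ⟨L₀, hL₀, HZ⟩ := zeta_le_two_mul
  set c' := min c (1 / (4 * C)) with hc'
  have hc'0 : 0 < c' := by positivity
  refine ⟨18 * C + 128 + 9 * (2 / c') ^ 15, by positivity, L₀, hL₀, fun L W hL hW a b ha hb => ?_⟩
  have hL1 : 1 ≤ L := hL₀.trans hL
  have hLpos : 0 < L := by linarith
  have hLc : (L : ℂ) ≠ 0 := by exact_mod_cast hLpos.ne'
  have haL : (a / L).re = 1 / L := by rw [Complex.div_ofReal_re, ha]
  have hbL : (b / L).re = 1 / L := by rw [Complex.div_ofReal_re, hb]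
  have hσ : 0 < 1 / L := by positivity
  have hcrude : ∀ Y, ‖∏ p ∈ roughPrimes W Y, locF (a / L) (b / L) p‖ ≤ (2 * L) ^ 3 := fun Y =>
    (norm_prod_locF_le hσ haL hbL).trans (by gcongr; exact HZ L hL)
  refine ⟨hcrude, ?_⟩
  obtain ⟨F, hF⟩ := exists_tendsto_locF W hσ haL hbL
  refine ⟨F, hF, ?_⟩
  set k := (1 + Real.log W) ^ 2 / L with hk
  have hk0 : 0 ≤ k := by positivity
  have ha1 := one_le_norm_of_re ha
  have hb1 := one_le_norm_of_re hb
  set q := ‖a‖ * ‖b‖ with hq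
  have hq1 : 1 ≤ q := one_le_mul_of_one_le_of_one_le ha1 hb1
  have hM : ‖a * b / (a + b)‖ ≤ q := norm_main_le ha hb
  have hWpos : (0 : ℝ) < W := by exact_mod_cast (by omega : 0 < W)
  have hV0 := mertensV_pos W
  have hV1 := mertensV_le_one W
  -- If `a` and `b` are small enough for the expansion of `ζ` near `1` to apply, the product is asymptotic to
  -- `a b / (a + b)`; otherwise the factor `(‖a‖ ‖b‖) ^ 16` makes the crude bound sufficient.
  by_cases hgood : 2 * q * k ≤ c'
  · have hbd : ∀ s : ℂ, s ≠ 0 → 0 ≤ s.re → ‖s‖ ≤ 2 * q →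
        ‖roughU W (s / L) - 1‖ ≤ C * (2 * q * k) := by
      intro s hs hsr hsq
      have hns : ‖s / (L : ℂ)‖ * (1 + Real.log W) ^ 2 = ‖s‖ * k := by
        rw [norm_div, Complex.norm_real, Real.norm_of_nonneg hLpos.le, hk]; ring
      have hle : ‖s‖ * k ≤ 2 * q * k := by gcongr
      have := HU W (s / L) (by omega) (div_ne_zero hs hLc)
        (by rw [Complex.div_ofReal_re]; positivity)
        (by rw [hns]; exact hle.trans (hgood.trans (min_le_left _ _)))
      rw [hns] at this
      exact this.trans (by gcongr)
    have hCq : C * (2 * q * k) ≤ 1 / 4 := by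
      have := hgood.trans (min_le_right _ _)
      rw [le_div_iff₀ (by positivity)] at this
      linarith
    have ha0 : a ≠ 0 := by rintro rfl; simp at ha
    have hb0 : b ≠ 0 := by rintro rfl; simp at hb
    have hab0 : a + b ≠ 0 := by
      intro h
      have := congrArg Complex.re h
      rw [Complex.add_re, ha, hb] at this
      norm_num at this
    have hUa := hbd a ha0 (by rw [ha]; norm_num) (by nlinarith)
    have hUb := hbd b hb0 (by rw [hb]; norm_num) (by nlinarith)
    have hUab := hbd (a + b) hab0 (by rw [Complex.add_re, ha, hb]; norm_num)
      ((norm_add_le _ _).trans (by nlinarith))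
    have hne : ∀ u : ℂ, ‖u - 1‖ ≤ C * (2 * q * k) → u ≠ 0 := by
      rintro u hu rfl
      rw [zero_sub, norm_neg, norm_one] at hu
      linarith
    have hUa0 := hne _ hUa
    have hUb0 := hne _ hUb
    have hUab0 := hne _ hUab
    have hVc : ((mertensV W : ℝ) : ℂ) ≠ 0 := by exact_mod_cast hV0.ne'
    have hsumdiv : a / L + b / L = (a + b) / L := by ring
    have hTa := tendsto_roughProd W (a := a / L) (by rw [haL]; exact hσ)
    have hTb := tendsto_roughProd W (a := b / L) (by rw [hbL]; exact hσ)
    have hTab := tendsto_roughProd W (a := a / L + b / L)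
      (by rw [Complex.add_re, haL, hbL]; positivity)
    rw [hsumdiv] at hTab
    have hE := (hTa.mul hTb).div hTab (by
      refine div_ne_zero (div_ne_zero hab0 hLc) (mul_ne_zero hVc hUab0))
    set E := a / (L : ℂ) / (mertensV W * roughU W (a / L)) *
      (b / (L : ℂ) / (mertensV W * roughU W (b / L))) /
      ((a + b) / (L : ℂ) / (mertensV W * roughU W ((a + b) / L))) with hEdef
    have hFE : ‖F - E‖ ≤ 32 / W * ‖E‖ := by
      refine le_of_tendsto_of_tendsto (hF.sub hE).norm (hE.norm.const_mul _) ?_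
      filter_upwards [eventually_ge_atTop W] with Y hY
      have := norm_prod_locF_sub_le hW hY (a := a / L) (b := b / L)
        (by rw [haL]; exact hσ.le) (by rw [hbL]; exact hσ.le)
      rw [hsumdiv] at this
      exact this
    set ρ := roughU W ((a + b) / L) / (roughU W (a / L) * roughU W (b / L)) with hρ
    have hLVE : L * mertensV W * E = a * b / (a + b) * ρ := by
      rw [hEdef, hρ]
      field_simp
    have hρ1 : ‖ρ - 1‖ ≤ 3 * (C * (2 * q * k) + C * (2 * q * k) + C * (2 * q * k)) :=
      roughU_ratio hUa hUb hUab hCq hCq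
    have hρ3 : ‖ρ‖ ≤ 4 := by
      have := norm_le_norm_sub_add ρ 1
      rw [norm_one] at this
      linarith
    have hLV : ‖(L : ℂ) * mertensV W‖ = L * mertensV W := by
      rw [← Complex.ofReal_mul, Complex.norm_real, Real.norm_of_nonneg (by positivity)]
    have e1 : ‖(L : ℂ) * mertensV W * (F - E)‖ ≤ 128 * (1 / W) * q ^ 16 := by
      rw [norm_mul]
      calc ‖(L : ℂ) * mertensV W‖ * ‖F - E‖ ≤ ‖(L : ℂ) * mertensV W‖ * (32 / W * ‖E‖) := by gcongr
        _ = 32 / W * ‖L * mertensV W * E‖ := by rw [norm_mul _ E]; ring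
        _ ≤ 32 / W * (q * 4) := by
            rw [hLVE, norm_mul]; gcongr
        _ = 128 * (1 / W) * q ^ 1 := by ring
        _ ≤ _ := by gcongr; norm_num
    have e2 : ‖a * b / (a + b) * (ρ - 1)‖ ≤ 18 * C * k * q ^ 16 := by
      rw [norm_mul]
      calc ‖a * b / (a + b)‖ * ‖ρ - 1‖
          ≤ q * (3 * (C * (2 * q * k) + C * (2 * q * k) + C * (2 * q * k))) := by gcongr
        _ = 18 * C * k * q ^ 2 := by ring
        _ ≤ _ := by gcongr; norm_num
    have hsplit : L * mertensV W * F - a * b / (a + b) =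
        L * mertensV W * (F - E) + a * b / (a + b) * (ρ - 1) := by
      rw [mul_sub, hLVE]; ring
    rw [hsplit]
    refine (norm_add_le _ _).trans ((add_le_add e1 e2).trans ?_)
    rw [← add_mul]
    gcongr
    have h1 : 0 ≤ (18 * C + 128 + 9 * (2 / c') ^ 15) * (L ^ 4 * k ^ 15) := by positivity
    have h2 : 0 ≤ (18 * C + 9 * (2 / c') ^ 15) * (1 / (W : ℝ)) := by positivity
    have h3 : 0 ≤ (128 + 9 * (2 / c') ^ 15) * k := by positivity
    linarith
  · rw [not_le] at hgood
    have h1 : 1 ≤ (2 * q * k / c') ^ 15 :=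
      one_le_pow₀ (by rw [one_le_div hc'0]; exact hgood.le)
    have hFle : ‖F‖ ≤ (2 * L) ^ 3 := le_of_tendsto' hF.norm hcrude
    have hLV : ‖(L : ℂ) * mertensV W‖ ≤ L := by
      rw [← Complex.ofReal_mul, Complex.norm_real, Real.norm_of_nonneg (by positivity)]
      exact mul_le_of_le_one_right hLpos.le hV1
    have h2 : ‖L * mertensV W * F - a * b / (a + b)‖ ≤ 9 * L ^ 4 * q := by
      refine (norm_sub_le _ _).trans ?_
      rw [norm_mul]
      calc ‖(L : ℂ) * mertensV W‖ * ‖F‖ + ‖a * b / (a + b)‖ ≤ L * (2 * L) ^ 3 + q := by gcongr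
        _ = 8 * L ^ 4 * 1 + 1 * q := by ring
        _ ≤ 8 * L ^ 4 * q + L ^ 4 * q := by
            gcongr
            exact one_le_pow₀ hL1
        _ = _ := by ring
    refine h2.trans ?_
    calc 9 * L ^ 4 * q ≤ 9 * L ^ 4 * q * (2 * q * k / c') ^ 15 := le_mul_of_one_le_right (by positivity) h1
      _ = 9 * (2 / c') ^ 15 * (L ^ 4 * k ^ 15) * q ^ 16 := by
          rw [div_pow, div_pow, mul_pow, mul_pow]; ring
      _ ≤ _ := by
          gcongr
          · linarith [hC]
          · have : 0 ≤ 1 / (W : ℝ) := by positivity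
            linarith

/-! ### Fourier representation of the weight -/

/-- The function `t ↦ e ^ t γ⁽ʲ⁾(t)`. The factor `e ^ t` moves the Fourier inversion of `γ⁽ʲ⁾` to the line
`Re s = 1`, inside the half-plane of convergence of the Euler products. -/
noncomputable def expDeriv (γ : ℝ → ℝ) (j : ℕ) (t : ℝ) : ℂ :=
  ((Real.exp t * iteratedDeriv j γ t : ℝ) : ℂ)

/-- The point `1 - 2 π i ξ` of the line `Re s = 1`. -/
noncomputable def lineC (ξ : ℝ) : ℂ := 1 - 2 * Real.pi * Complex.I * ξ

theorem lineC_re (ξ : ℝ) : (lineC ξ).re = 1 := by simp [lineC]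

theorem norm_lineC_sq (ξ : ℝ) : ‖lineC ξ‖ ^ 2 = 1 + (2 * Real.pi * ξ) ^ 2 := by
  rw [Complex.sq_norm, Complex.normSq_apply]
  simp [lineC]
  ring

theorem one_le_norm_lineC (ξ : ℝ) : 1 ≤ ‖lineC ξ‖ := one_le_norm_of_re (lineC_re ξ)

theorem continuous_lineC : Continuous lineC := by
  unfold lineC; fun_prop

theorem integrable_norm_lineC : MeasureTheory.Integrable fun ξ => (‖lineC ξ‖ ^ 2)⁻¹ := by
  simp only [norm_lineC_sq]
  exact integrable_inv_one_add_sq.comp_mul_left' (by positivity)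

theorem differentiable_iteratedDeriv_of_smooth {γ : ℝ → ℝ} (hγ : ContDiff ℝ (⊤ : ℕ∞) γ) (j : ℕ) :
    Differentiable ℝ (iteratedDeriv j γ) :=
  hγ.differentiable_iteratedDeriv j (by exact_mod_cast ENat.natCast_lt_top j)

theorem hasDerivAt_expDeriv {γ : ℝ → ℝ} (hγ : ContDiff ℝ (⊤ : ℕ∞) γ) (j : ℕ) (t : ℝ) :
    HasDerivAt (expDeriv γ j) (expDeriv γ j t + expDeriv γ (j + 1) t) t := by
  have h1 := (Real.hasDerivAt_exp t).mul (differentiable_iteratedDeriv_of_smooth hγ j t).hasDerivAt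
  rw [← iteratedDeriv_succ] at h1
  have h2 := h1.ofReal_comp
  rw [Complex.ofReal_add] at h2
  exact h2

theorem continuous_expDeriv {γ : ℝ → ℝ} (hγ : ContDiff ℝ (⊤ : ℕ∞) γ) (j : ℕ) :
    Continuous (expDeriv γ j) :=
  continuous_iff_continuousAt.2 fun t => (hasDerivAt_expDeriv hγ j t).continuousAt

theorem iteratedDeriv_eq_zero {γ : ℝ → ℝ} (hsupp : ∀ t ∉ Set.Icc (-1 : ℝ) 1, γ t = 0) (j : ℕ) :
    ∀ t ∉ Set.Icc (-1 : ℝ) 1, iteratedDeriv j γ t = 0 := by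
  intro t ht
  have : γ =ᶠ[𝓝 t] fun _ => (0 : ℝ) := by
    filter_upwards [isClosed_Icc.isOpen_compl.mem_nhds ht] with s hs using hsupp s hs
  rw [this.iteratedDeriv_eq]
  simp

theorem integrable_expDeriv {γ : ℝ → ℝ} (hγ : ContDiff ℝ (⊤ : ℕ∞) γ)
    (hsupp : ∀ t ∉ Set.Icc (-1 : ℝ) 1, γ t = 0) (j : ℕ) :
    MeasureTheory.Integrable (expDeriv γ j) := by
  refine (continuous_expDeriv hγ j).integrable_of_hasCompactSupport
    (HasCompactSupport.intro (isCompact_Icc (a := (-1 : ℝ)) (b := 1)) fun t ht => ?_)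
  rw [expDeriv, iteratedDeriv_eq_zero hsupp j t ht]
  simp

/-- The identity `(d/dt - 1) (e ^ t γ⁽ʲ⁾) = e ^ t γ⁽ʲ⁺¹⁾` on the Fourier side, where `d/dt` becomes
multiplication by `2 π i ξ`. -/
theorem fourier_expDeriv_succ {γ : ℝ → ℝ} (hγ : ContDiff ℝ (⊤ : ℕ∞) γ)
    (hsupp : ∀ t ∉ Set.Icc (-1 : ℝ) 1, γ t = 0) (j : ℕ) (ξ : ℝ) :
    FourierTransform.fourier (expDeriv γ (j + 1)) ξ =
      -(lineC ξ * FourierTransform.fourier (expDeriv γ j) ξ) := by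
  have h0 := integrable_expDeriv hγ hsupp j
  have h1 := integrable_expDeriv hγ hsupp (j + 1)
  have hd : deriv (expDeriv γ j) = expDeriv γ j + expDeriv γ (j + 1) :=
    funext fun t => (hasDerivAt_expDeriv hγ j t).deriv
  have h2 := Real.fourier_deriv h0 (fun t => (hasDerivAt_expDeriv hγ j t).differentiableAt)
    (by rw [hd]; exact h0.add h1)
  have h3 : FourierTransform.fourier (expDeriv γ j + expDeriv γ (j + 1)) ξ =
      FourierTransform.fourier (expDeriv γ j) ξ + FourierTransform.fourier (expDeriv γ (j + 1)) ξ := by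
    have := VectorFourier.fourierIntegral_add Real.continuous_fourierChar
      (L := innerₗ ℝ) continuous_inner h0 h1
    exact congrFun this ξ
  have h4 := congrFun h2 ξ
  rw [hd, h3, smul_eq_mul] at h4
  rw [lineC]
  linear_combination h4

theorem fourier_expDeriv {γ : ℝ → ℝ} (hγ : ContDiff ℝ (⊤ : ℕ∞) γ)
    (hsupp : ∀ t ∉ Set.Icc (-1 : ℝ) 1, γ t = 0) (j : ℕ) (ξ : ℝ) :
    FourierTransform.fourier (expDeriv γ j) ξ =
      (-lineC ξ) ^ j * FourierTransform.fourier (expDeriv γ 0) ξ := by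
  induction j with
  | zero => simp
  | succ j ih => rw [fourier_expDeriv_succ hγ hsupp, ih]; ring

theorem norm_fourier_expDeriv_le {γ : ℝ → ℝ}
    (hsupp : ∀ t ∉ Set.Icc (-1 : ℝ) 1, γ t = 0) (j : ℕ) {B : ℝ}
    (hB : ∀ t, |iteratedDeriv j γ t| ≤ B) (ξ : ℝ) :
    ‖FourierTransform.fourier (expDeriv γ j) ξ‖ ≤ 6 * B := by
  refine (VectorFourier.norm_fourierIntegral_le_integral_norm _ _ _ _ _).trans ?_
  have hB0 : 0 ≤ B := (abs_nonneg _).trans (hB 0)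
  have hz : ∀ t ∉ Set.Icc (-1 : ℝ) 1, ‖expDeriv γ j t‖ = 0 := by
    intro t ht
    rw [expDeriv, iteratedDeriv_eq_zero hsupp j t ht]
    simp
  rw [← MeasureTheory.setIntegral_eq_integral_of_forall_compl_eq_zero hz]
  have h1 : ∀ t ∈ Set.Icc (-1 : ℝ) 1, ‖‖expDeriv γ j t‖‖ ≤ 3 * B := by
    intro t ht
    rw [norm_norm, expDeriv, Complex.norm_real, norm_mul, Real.norm_eq_abs, Real.norm_eq_abs,
      Real.abs_exp]
    have : Real.exp t ≤ 3 := (Real.exp_le_exp.2 ht.2).trans Real.exp_one_lt_three.le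
    exact mul_le_mul this (hB t) (abs_nonneg _) (by norm_num)
  have h2 := MeasureTheory.norm_setIntegral_le_of_norm_le_const (μ := MeasureTheory.volume)
    (by simp : MeasureTheory.volume (Set.Icc (-1 : ℝ) 1) < ⊤) h1
  refine (Real.le_norm_self _).trans (h2.trans ?_)
  simp
  linarith

/-- Fourier inversion for `e ^ t γ⁽ʲ⁾(t)`, written on the line `Re s = 1`. -/
theorem iteratedDeriv_eq_integral {γ : ℝ → ℝ} (hγ : ContDiff ℝ (⊤ : ℕ∞) γ)
    (hsupp : ∀ t ∉ Set.Icc (-1 : ℝ) 1, γ t = 0) (j : ℕ)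
    (hint : MeasureTheory.Integrable (FourierTransform.fourier (expDeriv γ j))) (t : ℝ) :
    ((iteratedDeriv j γ t : ℝ) : ℂ) =
      ∫ ξ, FourierTransform.fourier (expDeriv γ j) ξ * Complex.exp (-(t * lineC ξ)) := by
  have h := congrFun ((continuous_expDeriv hγ j).fourierInv_fourier_eq
    (integrable_expDeriv hγ hsupp j) hint) t
  rw [Real.fourierInv_eq', expDeriv] at h
  have h2 : ((iteratedDeriv j γ t : ℝ) : ℂ) = Complex.exp (-t) *
      ((Real.exp t * iteratedDeriv j γ t : ℝ) : ℂ) := by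
    push_cast
    rw [← mul_assoc, ← Complex.exp_add]
    simp
  rw [h2, ← h, ← MeasureTheory.integral_const_mul]
  refine MeasureTheory.integral_congr_ae (.of_forall fun ξ => ?_)
  simp only [smul_eq_mul]
  have h3 : Complex.exp (-(t * lineC ξ)) =
      Complex.exp (-t) * Complex.exp (((2 * Real.pi * inner ℝ ξ t : ℝ) : ℂ) * Complex.I) := by
    rw [← Complex.exp_add]
    congr 1
    simp [lineC]
    ring
  rw [h3]
  ring

/-- A smooth weight supported in `[-1, 1]` and its derivative are superpositions of the exponentials
`e ^ (-t (1 - 2 π i ξ))`. The order `18` is the exponent `16` of `exists_locF_limit` plus the `2` needed for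
integrability. -/
theorem exists_fourier_rep {γ : ℝ → ℝ} (hγ : ContDiff ℝ (⊤ : ℕ∞) γ)
    (hsupp : ∀ t ∉ Set.Icc (-1 : ℝ) 1, γ t = 0) {B : ℝ}
    (hB : ∀ t, |iteratedDeriv 18 γ t| ≤ B) :
    ∃ H : ℝ → ℂ, Continuous H ∧ (∀ ξ, ‖H ξ‖ * ‖lineC ξ‖ ^ 18 ≤ 6 * B) ∧
      (∀ t : ℝ, (γ t : ℂ) = ∫ ξ, H ξ * Complex.exp (-(t * lineC ξ))) ∧
      ∀ t : ℝ, ((deriv γ t : ℝ) : ℂ) = -∫ ξ, lineC ξ * H ξ * Complex.exp (-(t * lineC ξ)) := by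
  set H := FourierTransform.fourier (expDeriv γ 0) with hH
  have hcont : Continuous H := by
    exact VectorFourier.fourierIntegral_continuous Real.continuous_fourierChar
      (L := innerₗ ℝ) continuous_inner (integrable_expDeriv hγ hsupp 0)
  have hbound : ∀ ξ, ‖H ξ‖ * ‖lineC ξ‖ ^ 18 ≤ 6 * B := by
    intro ξ
    have := norm_fourier_expDeriv_le hsupp 18 hB ξ
    rw [fourier_expDeriv hγ hsupp, norm_mul, norm_pow, norm_neg] at this
    linarith
  have hB0 : 0 ≤ B := (abs_nonneg _).trans (hB 0)
  have hint : ∀ j : ℕ, j ≤ 1 →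
      MeasureTheory.Integrable (FourierTransform.fourier (expDeriv γ j)) := by
    intro j hj
    refine (integrable_norm_lineC.const_mul (6 * B)).mono' ?_ (.of_forall fun ξ => ?_)
    · rw [funext (fourier_expDeriv hγ hsupp j)]
      exact ((continuous_lineC.neg.pow j).mul hcont).aestronglyMeasurable
    · have h1 := one_le_norm_lineC ξ
      rw [fourier_expDeriv hγ hsupp, norm_mul, norm_pow, norm_neg, ← div_eq_mul_inv,
        le_div_iff₀ (by positivity)]
      refine le_trans ?_ (hbound ξ)
      rw [← hH, mul_right_comm, ← pow_add, mul_comm]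
      gcongr
      omega
  refine ⟨H, hcont, hbound, fun t => ?_, fun t => ?_⟩
  · have := iteratedDeriv_eq_integral hγ hsupp 0 (hint 0 (by norm_num)) t
    rwa [iteratedDeriv_zero] at this
  · have := iteratedDeriv_eq_integral hγ hsupp 1 (hint 1 le_rfl) t
    rw [iteratedDeriv_one] at this
    rw [this, ← MeasureTheory.integral_neg]
    refine MeasureTheory.integral_congr_ae (.of_forall fun ξ => ?_)
    simp only [fourier_expDeriv_succ hγ hsupp 0 ξ]
    ring

/-! ### The sieve form as an integral -/

theorem locF_eq {p : ℕ} (hp : p ≠ 0) (a b : ℂ) :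
    locF a b p = 1 + (1 / (p : ℂ)) * (-Complex.exp (-(a * Real.log p)) +
      -Complex.exp (-(b * Real.log p)) +
      -Complex.exp (-(a * Real.log p)) * -Complex.exp (-(b * Real.log p))) := by
  have : Complex.exp (-((a + b) * Real.log p)) =
      Complex.exp (-(a * Real.log p)) * Complex.exp (-(b * Real.log p)) := by
    rw [← Complex.exp_add]; congr 1; ring
  rw [locF, eulerX_eq hp, eulerX_eq hp, eulerX_eq hp, this]
  ring

/-- With `γ` replaced by a pair of exponentials `e ^ (-a t)`, `e ^ (-b t)`, the sieve form is an Euler product. -/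
theorem sum_exp_eq_prod_locF (P : Finset ℕ) (hP : ∀ p ∈ P, p.Prime) (L : ℝ) (a b : ℂ) :
    ∑ A ∈ P.powerset, ∑ B ∈ P.powerset,
      ((-1) ^ A.card * (-1) ^ B.card * ∏ p ∈ A ∪ B, (1 / (p : ℂ))) *
        (Complex.exp (-(((∑ p ∈ A, Real.log p) / L : ℝ) * a)) *
          Complex.exp (-(((∑ p ∈ B, Real.log p) / L : ℝ) * b))) =
      ∏ p ∈ P, locF (a / L) (b / L) p := by
  have hexp : ∀ (A : Finset ℕ) (s : ℂ),
      (-1) ^ A.card * Complex.exp (-(((∑ p ∈ A, Real.log p) / L : ℝ) * s)) =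
        ∏ p ∈ A, -Complex.exp (-(s / L * Real.log p)) := by
    intro A s
    rw [Finset.prod_neg, ← Complex.exp_sum]
    congr 2
    push_cast
    rw [Finset.sum_div, Finset.sum_mul, ← Finset.sum_neg_distrib]
    refine Finset.sum_congr rfl fun p _ => ?_
    ring
  rw [Finset.prod_congr rfl fun p hp => locF_eq (hP p hp).ne_zero (a / L) (b / L),
    ← sum_powerset_pair]
  refine Finset.sum_congr rfl fun A _ => Finset.sum_congr rfl fun B _ => ?_
  rw [← hexp, ← hexp]
  ring

theorem continuous_locF (p : ℕ) (hp : p ≠ 0) (L : ℝ) :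
    Continuous fun z : ℝ × ℝ => locF (lineC z.1 / L) (lineC z.2 / L) p := by
  simp only [locF_eq hp]
  have h1 := continuous_lineC.comp (continuous_fst (X := ℝ) (Y := ℝ))
  have h2 := continuous_lineC.comp (continuous_snd (X := ℝ) (Y := ℝ))
  simp only [Function.comp_def] at h1 h2
  fun_prop

theorem norm_cexp_lineC_le (t : ℝ) (ξ : ℝ) :
    ‖Complex.exp (-(t * lineC ξ))‖ = Real.exp (-t) := by
  rw [Complex.norm_exp]
  simp [lineC_re]

theorem integrable_mul_cexp {H : ℝ → ℂ} (hH : MeasureTheory.Integrable H) (t : ℝ) :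
    MeasureTheory.Integrable fun ξ => H ξ * Complex.exp (-(t * lineC ξ)) := by
  refine hH.mul_bdd (c := Real.exp (-t)) ?_ (.of_forall fun ξ => (norm_cexp_lineC_le t ξ).le)
  have := continuous_lineC
  exact Continuous.aestronglyMeasurable (by fun_prop)

/-- The sieve form as a double Fourier integral of Euler products. -/
theorem sieveForm_eq_integral (P : Finset ℕ) (hP : ∀ p ∈ P, p.Prime) (L : ℝ) {γ : ℝ → ℝ}
    {H : ℝ → ℂ} (hH : MeasureTheory.Integrable H)
    (hγ : ∀ t : ℝ, (γ t : ℂ) = ∫ ξ, H ξ * Complex.exp (-(t * lineC ξ))) :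
    (sieveForm P (fun p => 1 / (p : ℝ)) γ L : ℂ) =
      ∫ z : ℝ × ℝ, H z.1 * H z.2 * ∏ p ∈ P, locF (lineC z.1 / L) (lineC z.2 / L) p := by
  have hint : ∀ (c : ℂ) (s t : ℝ), MeasureTheory.Integrable fun z : ℝ × ℝ =>
      c * ((H z.1 * Complex.exp (-(s * lineC z.1))) * (H z.2 * Complex.exp (-(t * lineC z.2)))) :=
    fun c s t => ((integrable_mul_cexp hH s).mul_prod (integrable_mul_cexp hH t)).const_mul c
  rw [sieveForm]
  push_cast
  have hterm : ∀ A B : Finset ℕ,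
      (-1 : ℂ) ^ A.card * (-1) ^ B.card * (∏ p ∈ A ∪ B, 1 / (p : ℂ)) *
        ((γ ((∑ p ∈ A, Real.log p) / L) : ℂ) * (γ ((∑ p ∈ B, Real.log p) / L) : ℂ)) =
      ∫ z : ℝ × ℝ, ((-1 : ℂ) ^ A.card * (-1) ^ B.card * (∏ p ∈ A ∪ B, 1 / (p : ℂ))) *
        ((H z.1 * Complex.exp (-(((∑ p ∈ A, Real.log p) / L : ℝ) * lineC z.1))) *
          (H z.2 * Complex.exp (-(((∑ p ∈ B, Real.log p) / L : ℝ) * lineC z.2)))) := by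
    intro A B
    rw [MeasureTheory.integral_const_mul, MeasureTheory.Measure.volume_eq_prod,
      MeasureTheory.integral_prod_mul (f := fun ξ => H ξ *
        Complex.exp (-(((∑ p ∈ A, Real.log p) / L : ℝ) * lineC ξ))) (g := fun ξ => H ξ *
        Complex.exp (-(((∑ p ∈ B, Real.log p) / L : ℝ) * lineC ξ))), ← hγ, ← hγ]
  rw [Finset.sum_congr rfl fun A _ => Finset.sum_congr rfl fun B _ => hterm A B]
  rw [Finset.sum_congr rfl fun A _ => (MeasureTheory.integral_finsetSum _
    fun B _ => hint _ _ _).symm, ← MeasureTheory.integral_finsetSum _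
    fun A _ => MeasureTheory.integrable_finsetSum _ fun B _ => hint _ _ _]
  refine MeasureTheory.integral_congr_ae (.of_forall fun z => ?_)
  simp only []
  rw [← sum_exp_eq_prod_locF P hP, Finset.mul_sum]
  refine Finset.sum_congr rfl fun A _ => ?_
  rw [Finset.mul_sum]
  refine Finset.sum_congr rfl fun B _ => ?_
  ring

theorem lineC_add_ne_zero (ξ η : ℝ) : lineC ξ + lineC η ≠ 0 := by
  intro h
  have := congrArg Complex.re h
  rw [Complex.add_re, lineC_re, lineC_re] at this
  norm_num at this

/-- The main term: `1 / (a + b) = ∫₀^∞ e ^ (-t (a + b)) dt` turns it into `∫₀^∞ γ'(t)² dt`. -/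
theorem integral_main {γ : ℝ → ℝ} {H : ℝ → ℂ}
    (hH : MeasureTheory.Integrable fun ξ => lineC ξ * H ξ)
    (hγ : ∀ t : ℝ, ((deriv γ t : ℝ) : ℂ) = -∫ ξ, lineC ξ * H ξ * Complex.exp (-(t * lineC ξ))) :
    ((∫ t in Set.Ioi (0 : ℝ), deriv γ t ^ 2 : ℝ) : ℂ) =
      ∫ z : ℝ × ℝ, H z.1 * H z.2 * (lineC z.1 * lineC z.2 / (lineC z.1 + lineC z.2)) := by
  rw [← integral_complex_ofReal]
  have h1 : ∀ t : ℝ, ((deriv γ t ^ 2 : ℝ) : ℂ) = ∫ z : ℝ × ℝ,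
      (lineC z.1 * H z.1) * (lineC z.2 * H z.2) *
        Complex.exp (-(lineC z.1 + lineC z.2) * t) := by
    intro t
    rw [Complex.ofReal_pow, hγ, neg_sq, sq, ← MeasureTheory.integral_prod_mul]
    refine MeasureTheory.integral_congr_ae (.of_forall fun z => ?_)
    simp only []
    rw [mul_mul_mul_comm, ← Complex.exp_add]
    congr 2
    ring
  simp only [h1]
  rw [MeasureTheory.integral_integral_swap]
  · refine MeasureTheory.integral_congr_ae (.of_forall fun z => ?_)
    simp only []
    rw [MeasureTheory.integral_const_mul, integral_exp_mul_complex_Ioi (by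
      simp [lineC_re])]
    have := lineC_add_ne_zero z.1 z.2
    rw [Complex.ofReal_zero, mul_zero, Complex.exp_zero, neg_div_neg_eq]
    field_simp
  · have hexp : MeasureTheory.Integrable (fun t : ℝ => Real.exp (-2 * t))
        (MeasureTheory.volume.restrict (Set.Ioi 0)) :=
      integrableOn_exp_mul_Ioi (by norm_num) 0
    have hHH := (hH.mul_prod hH).norm
    refine (hexp.mul_prod hHH).mono' ?_ (.of_forall fun x => ?_)
    · have hm : MeasureTheory.AEStronglyMeasurable (fun z : ℝ × ℝ =>
          (lineC z.1 * H z.1) * (lineC z.2 * H z.2)) := (hH.mul_prod hH).aestronglyMeasurable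
      have hc := continuous_lineC
      refine (hm.comp_snd).mul (Continuous.aestronglyMeasurable ?_)
      fun_prop
    · simp only [Function.uncurry]
      rw [norm_mul, Complex.norm_exp, mul_comm]
      simp [lineC_re]
      refine le_of_eq ?_
      congr 2
      ring

/-! ### Asymptotics of the sieve form -/

/-- Asymptotic evaluation of the sieve form for the weight `1 / [m, n]`, with an error controlled
by the eighteenth derivative of the smooth weight. The hypothesis on `S` says that the form does
not change once the primes `p ≤ N` are included; it allows passing to the infinite Euler product. -/
theorem sieveForm_estimate : ∃ C : ℝ, 0 < C ∧ ∃ L₀ : ℝ, 1 ≤ L₀ ∧ ∀ (L : ℝ) (W : ℕ), L₀ ≤ L →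
    16 ≤ W → ∀ γ : ℝ → ℝ, ContDiff ℝ (⊤ : ℕ∞) γ → (∀ t ∉ Set.Icc (-1 : ℝ) 1, γ t = 0) →
    ∀ B : ℝ, (∀ t, |iteratedDeriv 18 γ t| ≤ B) → ∀ (N : ℕ) (S : ℝ),
    (∀ Y, N ≤ Y → sieveForm (roughPrimes W Y) (fun p => 1 / (p : ℝ)) γ L = S) →
    |L * mertensV W * S - ∫ t in Set.Ioi (0 : ℝ), deriv γ t ^ 2| ≤
      C * ((1 + Real.log W) ^ 2 / L + 1 / W + L ^ 4 * ((1 + Real.log W) ^ 2 / L) ^ 15) * B ^ 2 := by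
  obtain ⟨C, hC, L₀, hL₀, HF⟩ := exists_locF_limit
  set I := ∫ ξ, (‖lineC ξ‖ ^ 2)⁻¹ with hI
  have hI0 : 0 ≤ I := MeasureTheory.integral_nonneg fun ξ => by positivity
  refine ⟨C * (6 * I) ^ 2 + 1, by positivity, L₀, hL₀, fun L W hL hW γ hγ hsupp B hB N S hS => ?_⟩
  obtain ⟨H, hHc, hHb, hrep, hrep'⟩ := exists_fourier_rep hγ hsupp hB
  have hL1 : 1 ≤ L := hL₀.trans hL
  have hB0 : 0 ≤ B := (abs_nonneg _).trans (hB 0)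
  set κ := (1 + Real.log W) ^ 2 / L + 1 / W + L ^ 4 * ((1 + Real.log W) ^ 2 / L) ^ 15 with hκ
  have hκ0 : 0 ≤ κ := by positivity
  have hdecay : ∀ n : ℕ, n ≤ 16 → ∀ ξ, ‖H ξ‖ * ‖lineC ξ‖ ^ n ≤ 6 * B * (‖lineC ξ‖ ^ 2)⁻¹ := by
    intro n hn ξ
    have h1 := one_le_norm_lineC ξ
    rw [← div_eq_mul_inv, le_div_iff₀ (by positivity), mul_assoc, ← pow_add]
    refine le_trans ?_ (hHb ξ)
    gcongr
    omega
  have hint : ∀ n : ℕ, n ≤ 16 → MeasureTheory.Integrable fun ξ => ‖H ξ‖ * ‖lineC ξ‖ ^ n := by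
    intro n hn
    refine (integrable_norm_lineC.const_mul (6 * B)).mono' ?_ (.of_forall fun ξ => ?_)
    · exact (hHc.norm.mul (continuous_lineC.norm.pow n)).aestronglyMeasurable
    · rw [Real.norm_of_nonneg (by positivity)]
      exact hdecay n hn ξ
  have hH0 : MeasureTheory.Integrable H := by
    refine (hint 0 (by norm_num)).mono' hHc.aestronglyMeasurable (.of_forall fun ξ => ?_)
    simp
  have hH1 : MeasureTheory.Integrable fun ξ => lineC ξ * H ξ := by
    refine (hint 1 (by norm_num)).mono' (continuous_lineC.mul hHc).aestronglyMeasurable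
      (.of_forall fun ξ => ?_)
    rw [norm_mul, pow_one, mul_comm]
  choose hcr F hFt hFb using fun z : ℝ × ℝ =>
    HF L W hL hW (lineC z.1) (lineC z.2) (lineC_re _) (lineC_re _)
  set M : ℝ × ℝ → ℂ := fun z => lineC z.1 * lineC z.2 / (lineC z.1 + lineC z.2) with hM
  have hl1 : Continuous fun z : ℝ × ℝ => lineC z.1 := continuous_lineC.comp continuous_fst
  have hl2 : Continuous fun z : ℝ × ℝ => lineC z.2 := continuous_lineC.comp continuous_snd
  have hHH : Continuous fun z : ℝ × ℝ => H z.1 * H z.2 :=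
    (hHc.comp continuous_fst).mul (hHc.comp continuous_snd)
  have hMc : Continuous M := (hl1.mul hl2).div (hl1.add hl2) fun z => lineC_add_ne_zero _ _
  have hPc : ∀ Y, Continuous fun z : ℝ × ℝ =>
      ∏ p ∈ roughPrimes W Y, locF (lineC z.1 / L) (lineC z.2 / L) p := fun Y =>
    continuous_finsetProd _ fun p hp => continuous_locF p (mem_roughPrimes.1 hp).2.ne_zero L
  have hMle : ∀ z, ‖M z‖ ≤ ‖lineC z.1‖ * ‖lineC z.2‖ := fun z => norm_main_le (lineC_re _) (lineC_re _)
  have hLV : ‖(L : ℂ) * mertensV W‖ ≤ L := by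
    rw [← Complex.ofReal_mul, Complex.norm_real,
      Real.norm_of_nonneg (mul_nonneg (by linarith) (mertensV_pos W).le)]
    exact mul_le_of_le_one_right (by linarith) (mertensV_le_one W)
  have hintM : MeasureTheory.Integrable fun z : ℝ × ℝ => H z.1 * H z.2 * M z := by
    refine ((hint 1 (by norm_num)).mul_prod (hint 1 (by norm_num))).mono'
      (hHH.mul hMc).aestronglyMeasurable (.of_forall fun z => ?_)
    rw [norm_mul, norm_mul, pow_one, pow_one, mul_mul_mul_comm]
    gcongr
    exact hMle z
  have hintP : ∀ Y, MeasureTheory.Integrable fun z : ℝ × ℝ =>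
      H z.1 * H z.2 * ∏ p ∈ roughPrimes W Y, locF (lineC z.1 / L) (lineC z.2 / L) p := fun Y =>
    (hH0.mul_prod hH0).mul_bdd (hPc Y).aestronglyMeasurable (.of_forall fun z => hcr z Y)
  -- For every `Y ≥ N` the difference to be bounded is one and the same integral.
  have hconst : ∀ Y, N ≤ Y → ∫ z : ℝ × ℝ, H z.1 * H z.2 *
      (L * mertensV W * ∏ p ∈ roughPrimes W Y, locF (lineC z.1 / L) (lineC z.2 / L) p - M z) =
      ((L * mertensV W * S - ∫ t in Set.Ioi (0 : ℝ), deriv γ t ^ 2 : ℝ) : ℂ) := by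
    intro Y hY
    rw [Complex.ofReal_sub, integral_main hH1 hrep', ← hS Y hY, Complex.ofReal_mul,
      Complex.ofReal_mul,
      sieveForm_eq_integral _ (fun p hp => (mem_roughPrimes.1 hp).2) L hH0 hrep,
      ← MeasureTheory.integral_const_mul, ← MeasureTheory.integral_sub ((hintP Y).const_mul _) hintM]
    refine MeasureTheory.integral_congr_ae (.of_forall fun z => ?_)
    simp only [hM]
    ring
  have hlim := MeasureTheory.tendsto_integral_of_dominated_convergence
    (μ := MeasureTheory.volume)
    (F := fun Y => fun z : ℝ × ℝ => H z.1 * H z.2 *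
      (L * mertensV W * ∏ p ∈ roughPrimes W Y, locF (lineC z.1 / L) (lineC z.2 / L) p - M z))
    (f := fun z => H z.1 * H z.2 * (L * mertensV W * F z - M z))
    (fun z => (L * (2 * L) ^ 3 + 1) * ((‖H z.1‖ * ‖lineC z.1‖ ^ 1) * (‖H z.2‖ * ‖lineC z.2‖ ^ 1)))
    (fun Y => (hHH.mul ((continuous_const.mul (hPc Y)).sub hMc)).aestronglyMeasurable)
    (((hint 1 (by norm_num)).mul_prod (hint 1 (by norm_num))).const_mul _)
    (fun Y => .of_forall fun z => by
      have h1 := one_le_norm_lineC z.1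
      have h2 := one_le_norm_lineC z.2
      have h3 : 1 ≤ ‖lineC z.1‖ * ‖lineC z.2‖ := one_le_mul_of_one_le_of_one_le h1 h2
      rw [norm_mul, norm_mul]
      calc ‖H z.1‖ * ‖H z.2‖ * ‖(L : ℂ) * mertensV W *
            ∏ p ∈ roughPrimes W Y, locF (lineC z.1 / L) (lineC z.2 / L) p - M z‖
          ≤ ‖H z.1‖ * ‖H z.2‖ * (L * (2 * L) ^ 3 * (‖lineC z.1‖ * ‖lineC z.2‖) +
              ‖lineC z.1‖ * ‖lineC z.2‖) := by
            gcongr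
            refine (norm_sub_le _ _).trans (add_le_add ?_ (hMle z))
            rw [norm_mul]
            refine le_trans ?_ (le_mul_of_one_le_right (by positivity) h3)
            exact mul_le_mul hLV (hcr z Y) (norm_nonneg _) (by linarith)
        _ = _ := by ring)
    (.of_forall fun z => (((hFt z).const_mul _).sub_const _).const_mul _)
  have hval := tendsto_nhds_unique hlim (tendsto_const_nhds.congr' (by
    filter_upwards [eventually_ge_atTop N] with Y hY using (hconst Y hY).symm))
  have hbound : ‖∫ z : ℝ × ℝ, H z.1 * H z.2 * (L * mertensV W * F z - M z)‖ ≤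
      ∫ z : ℝ × ℝ, C * κ * ((‖H z.1‖ * ‖lineC z.1‖ ^ 16) * (‖H z.2‖ * ‖lineC z.2‖ ^ 16)) := by
    refine MeasureTheory.norm_integral_le_of_norm_le
      (((hint 16 le_rfl).mul_prod (hint 16 le_rfl)).const_mul _) (.of_forall fun z => ?_)
    rw [norm_mul, norm_mul]
    calc ‖H z.1‖ * ‖H z.2‖ * ‖(L : ℂ) * mertensV W * F z - M z‖
        ≤ ‖H z.1‖ * ‖H z.2‖ * (C * κ * (‖lineC z.1‖ * ‖lineC z.2‖) ^ 16) := by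
          gcongr
          exact hFb z
      _ = _ := by ring
  rw [hval, Complex.norm_real, Real.norm_eq_abs, MeasureTheory.integral_const_mul,
    MeasureTheory.Measure.volume_eq_prod, MeasureTheory.integral_prod_mul
      (f := fun ξ => ‖H ξ‖ * ‖lineC ξ‖ ^ 16) (g := fun ξ => ‖H ξ‖ * ‖lineC ξ‖ ^ 16)] at hbound
  refine hbound.trans ?_
  have h16 : ∫ ξ, ‖H ξ‖ * ‖lineC ξ‖ ^ 16 ≤ 6 * B * I := by
    rw [hI, ← MeasureTheory.integral_const_mul]
    exact MeasureTheory.integral_mono (hint 16 le_rfl) (integrable_norm_lineC.const_mul _)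
      (hdecay 16 le_rfl)
  have h16' : 0 ≤ ∫ ξ, ‖H ξ‖ * ‖lineC ξ‖ ^ 16 :=
    MeasureTheory.integral_nonneg fun ξ => by positivity
  calc C * κ * ((∫ ξ, ‖H ξ‖ * ‖lineC ξ‖ ^ 16) * ∫ ξ, ‖H ξ‖ * ‖lineC ξ‖ ^ 16)
      ≤ C * κ * ((6 * B * I) * (6 * B * I)) := by gcongr
    _ = C * (6 * I) ^ 2 * κ * B ^ 2 := by ring
    _ ≤ _ := by
        gcongr
        linarith

/-- The main term is `1 + O(δ)`, since `γ' = -1` on `(0, 1 - δ)`. -/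
theorem abs_integral_deriv_sq_sub_one_le {γ : ℝ → ℝ} (hγ : ContDiff ℝ (⊤ : ℕ∞) γ)
    (hsupp : ∀ t ∉ Set.Icc (-1 : ℝ) 1, γ t = 0) {δ c : ℝ} (hδ0 : 0 ≤ δ) (hδ1 : δ ≤ 1)
    (hlin : ∀ t ∈ Set.Icc (0 : ℝ) (1 - δ), γ t = 1 - t) (hc : ∀ t, |deriv γ t| ≤ c) :
    |(∫ t in Set.Ioi (0 : ℝ), deriv γ t ^ 2) - 1| ≤ (1 + c ^ 2) * δ := by
  have hcont : Continuous fun t => deriv γ t ^ 2 := (hγ.continuous_deriv (by simp)).pow 2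
  have h1 : ∫ t in Set.Ioi (0 : ℝ), deriv γ t ^ 2 = ∫ t in (0 : ℝ)..1, deriv γ t ^ 2 := by
    rw [intervalIntegral.integral_of_le zero_le_one]
    refine (MeasureTheory.setIntegral_eq_of_subset_of_forall_sdiff_eq_zero measurableSet_Ioi
      Set.Ioc_subset_Ioi_self fun t ht => ?_)
    have ht1 : t ∉ Set.Icc (-1 : ℝ) 1 := fun h => ht.2 ⟨ht.1, h.2⟩
    have := iteratedDeriv_eq_zero hsupp 1 t ht1
    rw [iteratedDeriv_one] at this
    rw [this]
    norm_num
  have h2 : ∫ t in (0 : ℝ)..(1 - δ), deriv γ t ^ 2 = 1 - δ := by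
    have : ∫ t in (0 : ℝ)..(1 - δ), deriv γ t ^ 2 = ∫ t in (0 : ℝ)..(1 - δ), (1 : ℝ) := by
      rw [intervalIntegral.integral_of_le (by linarith), intervalIntegral.integral_of_le (by linarith),
        MeasureTheory.integral_Ioc_eq_integral_Ioo, MeasureTheory.integral_Ioc_eq_integral_Ioo]
      refine MeasureTheory.setIntegral_congr_fun measurableSet_Ioo fun t ht => ?_
      have : γ =ᶠ[𝓝 t] fun s => 1 - s := by
        filter_upwards [isOpen_Ioo.mem_nhds ht] with s hs using hlin s ⟨hs.1.le, hs.2.le⟩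
      rw [this.deriv_eq]
      simp
    rw [this]
    simp
  have h3 : |∫ t in (1 - δ)..1, deriv γ t ^ 2| ≤ c ^ 2 * δ := by
    have := intervalIntegral.norm_integral_le_of_norm_le_const (a := 1 - δ) (b := 1) (C := c ^ 2)
      (f := fun t => deriv γ t ^ 2) fun t _ => by
        rw [norm_pow, Real.norm_eq_abs]
        exact pow_le_pow_left₀ (abs_nonneg _) (hc t) 2
    rw [Real.norm_eq_abs, show |1 - (1 - δ)| = δ by rw [sub_sub_cancel, abs_of_nonneg hδ0]] at this
    exact this
  rw [h1, ← intervalIntegral.integral_add_adjacent_intervals (b := 1 - δ)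
    (hcont.intervalIntegrable _ _) (hcont.intervalIntegrable _ _), h2]
  rw [abs_le] at h3 ⊢
  constructor <;> linarith [h3.1, h3.2]

/-! ### The error term `E₀` -/

/-- Bounds for the parameters of the problem in terms of `u = (log X)^{1/3}`: since `log z₀ = u` and
`log R = ϑ u ^ 3`, the quantity `(1 + log W) ^ 2 / L` of `sieveForm_estimate` is `O(1 / u)`. -/
theorem error_le {ϑ : ℝ} (hϑ : 0 < ϑ) {X u : ℝ} (hX : 1 ≤ X)
    (hu : u = Real.log X ^ ((1 : ℝ) / 3)) (hu3 : 3 ≤ u) :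
    16 ≤ ⌊z0 X⌋₊ ∧
    (1 + Real.log ⌊z0 X⌋₊) ^ 2 / Real.log (X ^ ϑ) + 1 / (⌊z0 X⌋₊ : ℝ) +
      Real.log (X ^ ϑ) ^ 4 * ((1 + Real.log ⌊z0 X⌋₊) ^ 2 / Real.log (X ^ ϑ)) ^ 15 ≤
      (4 / ϑ + 1 + 4 ^ 15 / ϑ ^ 11) / u ∧
    Real.log (Real.log X) = 3 * Real.log u := by
  have hu0 : 0 < u := by linarith
  have hlog : Real.log X = u ^ 3 := by
    rw [hu, ← Real.rpow_natCast, ← Real.rpow_mul (Real.log_nonneg hX)]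
    norm_num
  have hL : Real.log (X ^ ϑ) = ϑ * u ^ 3 := by
    rw [Real.log_rpow (by linarith), hlog]
  have hz : z0 X = Real.exp u := by rw [z0, ← hu]
  have hW : 16 ≤ ⌊z0 X⌋₊ := by
    refine Nat.le_floor ?_
    rw [hz]
    have h1 : Real.exp 3 ≤ Real.exp u := Real.exp_le_exp.2 hu3
    have h2 : Real.exp 3 = Real.exp 1 ^ 3 := by rw [← Real.exp_nat_mul]; norm_num
    -- `2.7 ^ 3 > 19`
    have h3 : (2.7 : ℝ) ^ 3 ≤ Real.exp 1 ^ 3 :=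
      pow_le_pow_left₀ (by norm_num) (by linarith [Real.exp_one_gt_d9]) 3
    push_cast
    norm_num at h3
    linarith
  have hW0 : (0 : ℝ) < ⌊z0 X⌋₊ := by exact_mod_cast (by omega : 0 < ⌊z0 X⌋₊)
  have hW1 : (1 : ℝ) ≤ ⌊z0 X⌋₊ := by exact_mod_cast (by omega : 1 ≤ ⌊z0 X⌋₊)
  have hlogW : Real.log ⌊z0 X⌋₊ ≤ u := by
    rw [Real.log_le_iff_le_exp hW0, ← hz]
    exact Nat.floor_le (by rw [hz]; positivity)
  have hlogW0 := Real.log_nonneg hW1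
  have huW : u ≤ ⌊z0 X⌋₊ := by
    have h1 := Nat.lt_floor_add_one (z0 X)
    have h2 := Real.add_one_le_exp u
    rw [hz] at h1 ⊢
    linarith
  have hk : (1 + Real.log ⌊z0 X⌋₊) ^ 2 / Real.log (X ^ ϑ) ≤ 4 / ϑ / u := by
    rw [hL]
    calc (1 + Real.log ⌊z0 X⌋₊) ^ 2 / (ϑ * u ^ 3) ≤ (2 * u) ^ 2 / (ϑ * u ^ 3) := by
          gcongr; linarith
      _ = 4 / ϑ / u := by field_simp; norm_num
  have hk0 : 0 ≤ (1 + Real.log ⌊z0 X⌋₊) ^ 2 / Real.log (X ^ ϑ) := by rw [hL]; positivity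
  refine ⟨hW, ?_, by rw [hlog, Real.log_pow]; norm_num⟩
  have h4 : Real.log (X ^ ϑ) ^ 4 * ((1 + Real.log ⌊z0 X⌋₊) ^ 2 / Real.log (X ^ ϑ)) ^ 15 ≤
      4 ^ 15 / ϑ ^ 11 / u := by
    calc _ ≤ Real.log (X ^ ϑ) ^ 4 * (4 / ϑ / u) ^ 15 := by rw [hL] at *; gcongr
      _ = 4 ^ 15 / ϑ ^ 11 / u ^ 3 := by rw [hL]; field_simp
      _ ≤ 4 ^ 15 / ϑ ^ 11 / u := by
          gcongr
          exact le_self_pow₀ (by linarith) (by norm_num)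
  have h5 : 1 / (⌊z0 X⌋₊ : ℝ) ≤ 1 / u := one_div_le_one_div_of_le hu0 huW
  calc _ ≤ 4 / ϑ / u + 1 / u + 4 ^ 15 / ϑ ^ 11 / u := by gcongr
    _ = _ := by ring

/-- The weight of an integer `m > R` vanishes. -/
theorem weight_eq_zero_of_floor_lt {X ϑ : ℝ} (hL : 0 < Real.log (X ^ ϑ)) (hX : 0 < X) {γ : ℝ → ℝ}
    (hγ : ∀ t ∉ Set.Icc (-1 : ℝ) 1, γ t = 0) (m : ℕ) (hm : ⌊X ^ ϑ⌋₊ < m) :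
    γ (Real.log m / Real.log (X ^ ϑ)) = 0 := by
  refine hγ _ fun h => ?_
  have h1 : X ^ ϑ < m := (Nat.floor_lt (by positivity)).1 hm
  have h2 : Real.log (X ^ ϑ) < Real.log m := Real.log_lt_log (by positivity) h1
  have := h.2
  rw [div_le_one hL] at this
  linarith

/-- Primes beyond `R` do not contribute to the sieve form. -/
theorem sieveForm_eq_of_le {X ϑ : ℝ} (hL : 0 < Real.log (X ^ ϑ)) (hX : 0 < X) {γ : ℝ → ℝ}
    (hγ : ∀ t ∉ Set.Icc (-1 : ℝ) 1, γ t = 0) {Y : ℕ} (hY : ⌊X ^ ϑ⌋₊ ≤ Y) :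
    sieveForm (roughPrimes ⌊z0 X⌋₊ Y) (fun p => 1 / (p : ℝ)) γ (Real.log (X ^ ϑ)) =
      sieveForm (roughPrimes ⌊z0 X⌋₊ ⌊X ^ ϑ⌋₊) (fun p => 1 / (p : ℝ)) γ (Real.log (X ^ ϑ)) := by
  -- `1 / p` is the local weight for `h = 0` and `ℓ = 1`.
  have hw : ∀ Y, sieveForm (roughPrimes ⌊z0 X⌋₊ Y) (locWeight 0 1) γ (Real.log (X ^ ϑ)) =
      sieveForm (roughPrimes ⌊z0 X⌋₊ Y) (fun p => 1 / (p : ℝ)) γ (Real.log (X ^ ϑ)) := by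
    intro Y
    refine Finset.sum_congr rfl fun A hA => Finset.sum_congr rfl fun B hB => ?_
    congr 2
    refine Finset.prod_congr rfl fun p hp => ?_
    have hpp := (mem_roughPrimes.1 (Finset.union_subset (Finset.mem_powerset.1 hA)
      (Finset.mem_powerset.1 hB) hp)).2
    rw [locWeight, if_neg (by rw [Nat.dvd_one]; exact hpp.ne_one)]
    simp
  rw [← hw, ← hw, ← sum_eq_sieveForm hY 0 γ (weight_eq_zero_of_floor_lt hL hX hγ),
    ← sum_eq_sieveForm le_rfl 0 γ (weight_eq_zero_of_floor_lt hL hX hγ)]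

/-- The main term: the sieve form with weight `1 / [m, n]` is asymptotic to
`(log R)⁻¹ ∏_{p ≤ z₀} (1 - 1/p)⁻¹`. The weight varies with `X`, but its derivatives grow only like powers
of `log log X`. -/
theorem tendsto_sieveForm {ϑ : ℝ} (hϑ : 0 < ϑ) (G : ℝ → ℝ → ℝ)
    (hGsmooth : ∀ X : ℝ, ContDiff ℝ (⊤ : ℕ∞) (G X))
    (hGsupp : ∀ X : ℝ, ∀ t : ℝ, t ∉ Set.Icc (-1 : ℝ) 1 → G X t = 0)
    (hGderiv : ∀ j : ℕ, 1 ≤ j → ∃ C : ℝ, ∀ X : ℝ, 16 ≤ X → ∀ t : ℝ,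
      |iteratedDeriv j (G X) t| ≤ C * Real.log (Real.log X) ^ (j - 1))
    (hGlin : ∀ X : ℝ, 16 ≤ X → ∀ t ∈ Set.Icc (0 : ℝ) (1 - (Real.log (Real.log X))⁻¹),
      G X t = 1 - t) :
    Tendsto (fun X => Real.log (X ^ ϑ) * mertensV ⌊z0 X⌋₊ *
      sieveForm (roughPrimes ⌊z0 X⌋₊ ⌊X ^ ϑ⌋₊) (fun p => 1 / (p : ℝ)) (G X)
        (Real.log (X ^ ϑ)) - 1) atTop (𝓝 0) := by
  obtain ⟨C, hC, L₀, hL₀, hest⟩ := sieveForm_estimate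
  obtain ⟨B, hB⟩ := hGderiv 18 (by norm_num)
  obtain ⟨c, hc⟩ := hGderiv 1 le_rfl
  have hloglog : Tendsto (fun X => Real.log (Real.log X)) atTop atTop :=
    Real.tendsto_log_atTop.comp Real.tendsto_log_atTop
  have hu : Tendsto (fun X => Real.log X ^ ((1 : ℝ) / 3)) atTop atTop :=
    (tendsto_rpow_atTop (by norm_num)).comp Real.tendsto_log_atTop
  set D := 4 / ϑ + 1 + 4 ^ 15 / ϑ ^ 11 with hD
  have hlim1 : Tendsto (fun X => C * D * B ^ 2 * 3 ^ 34 *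
      (Real.log (Real.log X ^ ((1 : ℝ) / 3)) ^ 34 / (Real.log X ^ ((1 : ℝ) / 3)))) atTop (𝓝 0) := by
    have h1 := (Real.tendsto_pow_log_div_mul_add_atTop 1 0 34 one_ne_zero).comp hu
    have h2 := h1.const_mul (C * D * B ^ 2 * 3 ^ 34)
    rw [mul_zero] at h2
    refine h2.congr fun X => ?_
    simp only [Function.comp_apply, one_mul, add_zero]
  have hlim2 : Tendsto (fun X => (1 + c ^ 2) * (Real.log (Real.log X))⁻¹) atTop (𝓝 0) := by
    have := (tendsto_inv_atTop_zero.comp hloglog).const_mul (1 + c ^ 2)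
    rwa [mul_zero] at this
  have hlim := hlim1.add hlim2
  rw [add_zero] at hlim
  refine squeeze_zero_norm' ?_ hlim
  filter_upwards [eventually_ge_atTop 16, hu.eventually_ge_atTop 3,
    (tendsto_log_rpow hϑ).eventually_ge_atTop L₀, hloglog.eventually_ge_atTop 1] with X hX hu3 hL hll
  have hX0 : 0 < X := by linarith
  have hL0 : 0 < Real.log (X ^ ϑ) := by linarith
  obtain ⟨hW, hκ, hlogu⟩ := error_le hϑ (by linarith : 1 ≤ X) rfl hu3
  have hmain := hest (Real.log (X ^ ϑ)) ⌊z0 X⌋₊ hL hW (G X) (hGsmooth X) (hGsupp X) _ (hB X hX)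
    ⌊X ^ ϑ⌋₊ _ fun Y hY => sieveForm_eq_of_le hL0 hX0 (hGsupp X) hY
  have hone := abs_integral_deriv_sq_sub_one_le (hGsmooth X) (hGsupp X)
    (inv_nonneg.2 (by linarith : 0 ≤ Real.log (Real.log X))) (inv_le_one_of_one_le₀ hll)
    (hGlin X hX) (c := c) fun t => by simpa using hc X hX t
  rw [Real.norm_eq_abs]
  refine (abs_sub_le _ (∫ t in Set.Ioi (0 : ℝ), deriv (G X) t ^ 2) _).trans
    (add_le_add (hmain.trans ?_) hone)
  rw [hlogu]
  calc _ ≤ C * (D / (Real.log X ^ ((1 : ℝ) / 3))) *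
        (B * (3 * Real.log (Real.log X ^ ((1 : ℝ) / 3))) ^ (18 - 1)) ^ 2 := by gcongr
    _ = _ := by
      norm_num
      ring

/-- The Selberg-sieve evaluation lemma.  Here `G X` is the smooth sieve weight at parameter
`X` (smooth, non-negative, supported on `[-1,1]`, uniformly bounded, with
`|G^{(j)}| ≪_j (log log X)^{j-1}` and `G(t) = 1 - t` on `[0, 1 - (log log X)⁻¹]`);
`R = X^ϑ` with `ϑ ∈ (0,1/2)` fixed, and `h` satisfies `|h(p)| ≤ C_h p^{-ε}` on primes.
Then there is `E₀(X) → 0`, depending only on `X`, `G`, `ϑ`, so that uniformly for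
positive integers `ℓ ≤ X^K`,
`∑∑_{m,n ≤ R, (mn, ℓP(z₀)) = 1} μ(m)μ(n)/[m,n] · G(log m/log R) G(log n/log R)
    ∏_{p | mn} (1 + h(p))
  = (1 + E₀(X))/log R · ∏_{p ≤ z₀} (1 - 1/p)⁻¹ + O_{ε,A}((log R)^{-A})`. -/
theorem statement7 (ϑ : ℝ) (hϑ0 : 0 < ϑ) (hϑ1 : ϑ < 1 / 2)
    (G : ℝ → ℝ → ℝ)
    (hGsmooth : ∀ X : ℝ, ContDiff ℝ (⊤ : ℕ∞) (G X))
    (hGnonneg : ∀ X t : ℝ, 0 ≤ G X t)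
    (hGsupp : ∀ X : ℝ, ∀ t : ℝ, t ∉ Set.Icc (-1 : ℝ) 1 → G X t = 0)
    (hGbdd : ∃ C : ℝ, ∀ X t : ℝ, |G X t| ≤ C)
    (hGderiv : ∀ j : ℕ, 1 ≤ j → ∃ C : ℝ, ∀ X : ℝ, 16 ≤ X → ∀ t : ℝ,
      |iteratedDeriv j (G X) t| ≤ C * Real.log (Real.log X) ^ (j - 1))
    (hGlin : ∀ X : ℝ, 16 ≤ X → ∀ t ∈ Set.Icc (0 : ℝ) (1 - (Real.log (Real.log X))⁻¹),
      G X t = 1 - t) :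
    ∃ E₀ : ℝ → ℝ, Filter.Tendsto E₀ Filter.atTop (nhds 0) ∧
      ∀ ε A K Ch : ℝ, 0 < ε → 0 < A → 0 < K → 0 < Ch →
        ∃ C : ℝ, 0 < C ∧ ∃ X₀ : ℝ, ∀ X : ℝ, X₀ ≤ X →
          ∀ h : ℕ → ℝ, (∀ p : ℕ, p.Prime → |h p| ≤ Ch * (p : ℝ) ^ (-ε)) →
          ∀ ℓ : ℕ, 0 < ℓ → (ℓ : ℝ) ≤ X ^ K →
          |(∑ m ∈ Finset.Icc 1 ⌊X ^ ϑ⌋₊, ∑ n ∈ Finset.Icc 1 ⌊X ^ ϑ⌋₊,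
              if Nat.gcd (m * n) (ℓ * Pprod (z0 X)) = 1 then
                (ArithmeticFunction.moebius m : ℝ) * (ArithmeticFunction.moebius n : ℝ) /
                    (Nat.lcm m n) *
                  G X (Real.log m / Real.log (X ^ ϑ)) *
                  G X (Real.log n / Real.log (X ^ ϑ)) *
                  ∏ p ∈ (m * n).primeFactors, (1 + h p)
              else 0) -
            (1 + E₀ X) / Real.log (X ^ ϑ) *
              ∏ p ∈ (Finset.Iic ⌊z0 X⌋₊).filter Nat.Prime, (1 - 1 / (p : ℝ))⁻¹| ≤
          C * Real.log (X ^ ϑ) ^ (-A) := by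
  -- The main term is the sum with `h = 0` and `ℓ = 1`; `E₀` is defined so that it is represented exactly.
  refine ⟨fun X => Real.log (X ^ ϑ) * mertensV ⌊z0 X⌋₊ *
    sieveForm (roughPrimes ⌊z0 X⌋₊ ⌊X ^ ϑ⌋₊) (fun p => 1 / (p : ℝ)) (G X)
      (Real.log (X ^ ϑ)) - 1,
    tendsto_sieveForm hϑ0 G hGsmooth hGsupp hGderiv hGlin, fun ε A K Ch hε _ hK hCh => ?_⟩
  obtain ⟨X₀, hX₀⟩ := sieveForm_removal hϑ0 G hGbdd ε A K Ch hε hK hCh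
  obtain ⟨X₁, hX₁⟩ := eventually_atTop.1 ((tendsto_log_rpow hϑ0).eventually_gt_atTop 0)
  refine ⟨1, one_pos, max X₀ (max X₁ 1), fun X hX h hh ℓ hℓ hℓX => ?_⟩
  have hXX₀ : X₀ ≤ X := (le_max_left _ _).trans hX
  have hL : 0 < Real.log (X ^ ϑ) :=
    hX₁ X ((le_max_left _ _).trans ((le_max_right _ _).trans hX))
  have hX0 : 0 < X :=
    one_pos.trans_le ((le_max_right _ _).trans ((le_max_right _ _).trans hX))
  rw [sum_eq_sieveForm le_rfl h (G X) (weight_eq_zero_of_floor_lt hL hX0 (hGsupp X)), one_mul]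
  have hmain := hX₀ X hXX₀ h hh ℓ hℓ hℓX
  have hV := (mertensV_pos ⌊z0 X⌋₊).ne'
  have hprod : ∏ p ∈ (Finset.Iic ⌊z0 X⌋₊).filter Nat.Prime, (1 - 1 / (p : ℝ))⁻¹ =
      (mertensV ⌊z0 X⌋₊)⁻¹ := by rw [Finset.prod_inv_distrib, mertensV]
  rw [hprod]
  convert hmain using 3
  rw [add_sub_cancel]
  field_simp
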